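/- arXiv:1608.02650 — 2 statements merged into one kernel-verified Lean document; each statement's English description precedes it below -/
import Mathlib

section
/- (No-unilocal-broadcasting of mutual information) Let ρ_{AB} be a bipartite density matrix. There exists a quantum channel Γ: B → B₁B₂ such that ρ̃ = (id_A ⊗ Γ)[ρ_{AB}] satisfies I(A:B₁)_{ρ̃} = I(A:B₂)_{ρ̃} = I(A:B)_ρ if and only if ρ_{AB} is classical on B, i.e., ρ_{AB} = Σ_j p_j ρ_j^A ⊗ |b_j⟩⟨b_j| for some orthonormal basis {|b_j⟩} of H_B. -/
open Matrix Kronecker ComplexOrder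

section Defs
variable {α α' β β' γ : Type*} [Fintype α] [DecidableEq α] [Fintype α'] [DecidableEq α']
  [Fintype β] [DecidableEq β] [Fintype β'] [DecidableEq β'] [Fintype γ] [DecidableEq γ]

/-- A density matrix: a positive semidefinite matrix with unit trace. -/
def IsDensityMatrix (ρ : Matrix β β ℂ) : Prop := ρ.PosSemidef ∧ ρ.trace = 1

/-- The map `id_α ⊗ Λ` induced on matrices over the product index type. -/
noncomputable def idTensor (Λ : Matrix β β ℂ →ₗ[ℂ] Matrix β' β' ℂ) :
    Matrix (α × β) (α × β) ℂ →ₗ[ℂ] Matrix (α × β') (α × β') ℂ where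
  toFun M := Matrix.of fun p q => Λ (Matrix.of fun b b' => M (p.1, b) (q.1, b')) p.2 q.2
  map_add' M N := by
    ext p q
    show Λ (Matrix.of fun b b' => (M + N) (p.1, b) (q.1, b')) p.2 q.2 = _
    have h : (Matrix.of fun b b' => (M + N) (p.1, b) (q.1, b')) =
        (Matrix.of fun b b' => M (p.1, b) (q.1, b')) +
          (Matrix.of fun b b' => N (p.1, b) (q.1, b')) := rfl
    rw [h, map_add]
    rfl
  map_smul' c M := by
    ext p q
    show Λ (Matrix.of fun b b' => (c • M) (p.1, b) (q.1, b')) p.2 q.2 = _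
    have h : (Matrix.of fun b b' => (c • M) (p.1, b) (q.1, b')) =
        c • (Matrix.of fun b b' => M (p.1, b) (q.1, b')) := rfl
    rw [h, _root_.map_smul]
    rfl

/-- Complete positivity: all extensions `id ⊗ Λ` preserve positive semidefiniteness. -/
def IsCompletelyPositive (Λ : Matrix β β ℂ →ₗ[ℂ] Matrix β' β' ℂ) : Prop :=
  ∀ (k : ℕ) (M : Matrix (Fin k × β) (Fin k × β) ℂ), M.PosSemidef → (idTensor Λ M).PosSemidef

/-- A quantum channel: a completely positive trace-preserving linear map. -/
def IsQuantumChannel (Λ : Matrix β β ℂ →ₗ[ℂ] Matrix β' β' ℂ) : Prop :=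
  IsCompletelyPositive Λ ∧ ∀ X, (Λ X).trace = X.trace

/-- Partial trace over the second tensor factor. -/
noncomputable def ptraceRight (M : Matrix (α × β) (α × β) ℂ) : Matrix α α ℂ :=
  Matrix.of fun a a' => ∑ b, M (a, b) (a', b)

/-- Partial trace over the first tensor factor. -/
noncomputable def ptraceLeft (M : Matrix (α × β) (α × β) ℂ) : Matrix β β ℂ :=
  Matrix.of fun b b' => ∑ a, M (a, b) (a, b')

/-- The von Neumann entropy `S(ρ) = -Tr(ρ log₂ ρ)`, computed via the eigenvalues
(with the convention `0 log 0 = 0`; junk value `0` for non-Hermitian input). -/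
noncomputable def vnEntropy (ρ : Matrix β β ℂ) : ℝ :=
  if h : ρ.IsHermitian then -∑ i, h.eigenvalues i * Real.logb 2 (h.eigenvalues i) else 0

/-- The mutual information `I(A:B) = S(A) + S(B) - S(AB)` of a bipartite state. -/
noncomputable def mutualInfo (ρ : Matrix (α × β) (α × β) ℂ) : ℝ :=
  vnEntropy (ptraceRight ρ) + vnEntropy (ptraceLeft ρ) - vnEntropy ρ

/-- Partial trace over the third tensor factor of a tripartite system. -/
noncomputable def ptraceThird (M : Matrix (α × β × γ) (α × β × γ) ℂ) :
    Matrix (α × β) (α × β) ℂ :=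
  Matrix.of fun p q => ∑ c, M (p.1, p.2, c) (q.1, q.2, c)

/-- Partial trace over the second tensor factor of a tripartite system. -/
noncomputable def ptraceSecond (M : Matrix (α × β × γ) (α × β × γ) ℂ) :
    Matrix (α × γ) (α × γ) ℂ :=
  Matrix.of fun p q => ∑ b, M (p.1, b, p.2) (q.1, b, q.2)

/-- A bipartite state is classical on `B` if it has the form
`∑ⱼ pⱼ ρⱼ^A ⊗ |bⱼ⟩⟨bⱼ|` for an orthonormal basis `{|bⱼ⟩}` of `H_B`. -/
def ClassicalOnB (ρ : Matrix (α × β) (α × β) ℂ) : Prop :=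
  ∃ (p : β → ℝ) (τ : β → Matrix α α ℂ) (bv : β → β → ℂ),
    (∀ j, 0 ≤ p j) ∧ (∑ j, p j = 1) ∧ (∀ j, IsDensityMatrix (τ j)) ∧
    (∀ j j', star (bv j) ⬝ᵥ bv j' = if j = j' then 1 else 0) ∧
    ρ = ∑ j, (p j : ℂ) • (τ j ⊗ₖ vecMulVec (bv j) (star (bv j)))

end Defs


set_option linter.unusedSectionVars false

section PartA
variable {α β : Type*} [Fintype α] [DecidableEq α] [Fintype β] [DecidableEq β]

theorem nub_trace_zero_of_sum {ι : Type*} (s : Finset ι) (M : ι → Matrix β β ℂ)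
    (h : ∑ i ∈ s, ((M i)ᴴ * M i).trace = 0) : ∀ i ∈ s, M i = 0 := by
  have h0 : ∀ i ∈ s, 0 ≤ ((M i)ᴴ * M i).trace := fun i _ =>
    (posSemidef_conjTranspose_mul_self (M i)).trace_nonneg
  intro i hi
  exact trace_conjTranspose_mul_self_eq_zero_iff.1 ((Finset.sum_eq_zero_iff_of_nonneg h0).1 h i hi)

/-- Core algebra: commutation of the blocks of `r⁻¹ρ` and `r⁻²ρ²` gives commutation of the
blocks of `ρ`. -/
theorem nub_comm_core (r h g P : Matrix β β ℂ) (R : α → α → Matrix β β ℂ)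
    (hh : hᴴ = h) (hg : gᴴ = g) (hr : h * h = r) (hP1 : h * g = P) (hP2 : g * h = P)
    (hPh : P * h = h) (hPg : P * g = g) (hRh : ∀ a b, (R a b)ᴴ = R b a)
    (hPR : ∀ a b, P * R a b = R a b)
    (hc1 : ∀ a b c d, Commute (g * g * R a b) (g * g * R c d))
    (hc2 : ∀ a b c d, Commute (∑ e, g * g * (g * g * R a e) * R e b) (g * g * R c d)) :
    ∀ a b c d, Commute (R a b) (R c d) := by
  have hPH : Pᴴ = P := by rw [← hP1, conjTranspose_mul, hh, hg, hP2, hP1]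
  have hhP : h * P = h := by
    have := congrArg conjTranspose hPh; rwa [conjTranspose_mul, hh, hPH] at this
  have hgP : g * P = g := by
    have := congrArg conjTranspose hPg; rwa [conjTranspose_mul, hg, hPH] at this
  have hRP : ∀ a b, R a b * P = R a b := by
    intro a b
    have := congrArg conjTranspose (hPR b a); rwa [conjTranspose_mul, hRh, hPH] at this
  set E : α → α → Matrix β β ℂ := fun a b => g * R a b * g with hE
  have hEH : ∀ a b, (E a b)ᴴ = E b a := by
    intro a b; simp only [hE, conjTranspose_mul, hg, hRh, mul_assoc]
  have hPE : ∀ a b, P * E a b = E a b := by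
    intro a b; simp only [hE, ← mul_assoc, hPg]
  have hEP : ∀ a b, E a b * P = E a b := by
    intro a b; simp only [hE, mul_assoc, hgP]
  have hT1 : ∀ a b, g * g * R a b = g * E a b * h := by
    intro a b
    simp only [hE]
    rw [show g * (g * R a b * g) * h = g * g * (R a b * (g * h)) by noncomm_ring, hP2, hRP]
  have hRE : ∀ a b, R a b = h * E a b * h := by
    intro a b
    simp only [hE]
    rw [show h * (g * R a b * g) * h = (h * g) * R a b * (g * h) by noncomm_ring, hP2, hP1, hPR, hRP]
  have conjc : ∀ X Y : Matrix β β ℂ, P * X = X → X * P = X → P * Y = Y → Y * P = Y →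
      Commute (g * X * h) (g * Y * h) → Commute X Y := by
    intro X Y h1 h2 h3 h4 hc
    have : h * (g * X * h * (g * Y * h)) * g = h * (g * Y * h * (g * X * h)) * g := by rw [hc.eq]
    rw [show h * (g * X * h * (g * Y * h)) * g = (h * g) * X * (h * g) * Y * (h * g) by noncomm_ring,
      show h * (g * Y * h * (g * X * h)) * g = (h * g) * Y * (h * g) * X * (h * g) by noncomm_ring,
      hP1, h1, h3, h2, h4, mul_assoc X Y P, mul_assoc Y X P, h2, h4] at this
    exact this
  have hEE : ∀ a b c d, Commute (E a b) (E c d) := by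
    intro a b c d
    apply conjc _ _ (hPE _ _) (hEP _ _) (hPE _ _) (hEP _ _)
    rw [← hT1, ← hT1]; exact hc1 a b c d
  set W : α → α → Matrix β β ℂ := fun a b => ∑ e, g * g * E a e * r * E e b with hW
  have hT2 : ∀ a b, ∑ e, g * g * (g * g * R a e) * R e b = g * W a b * h := by
    intro a b
    simp only [hW, Finset.mul_sum, Finset.sum_mul]
    refine Finset.sum_congr rfl fun e _ => ?_
    rw [hT1, hRE e b, ← hr]; noncomm_ring
  have hPW : ∀ a b, P * W a b = W a b := by
    intro a b; simp only [hW, Finset.mul_sum, ← mul_assoc, hPg]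
  have hWP : ∀ a b, W a b * P = W a b := by
    intro a b; simp only [hW, Finset.sum_mul, mul_assoc, hEP]
  have hWE : ∀ a b c d, Commute (W a b) (E c d) := by
    intro a b c d
    apply conjc _ _ (hPW _ _) (hWP _ _) (hPE _ _) (hEP _ _)
    rw [← hT1, ← hT2]; exact hc2 a b c d
  have hrg : r * (g * g) = P := by
    rw [← hr, show h * h * (g * g) = h * (h * g) * g by noncomm_ring, hP1, hhP, hP1]
  have hrW : ∀ a b, r * W a b = ∑ e, E a e * r * E e b := by
    intro a b
    simp only [hW, Finset.mul_sum]
    refine Finset.sum_congr rfl fun e _ => ?_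
    rw [show r * (g * g * E a e * r * E e b) = (r * (g * g)) * E a e * r * E e b by noncomm_ring,
      hrg, hPE]
  set N : α → α → Matrix β β ℂ := fun a b => W a b - ∑ e, E a e * E e b with hN
  have hNE : ∀ a b c d, Commute (N a b) (E c d) := by
    intro a b c d
    refine (hWE a b c d).sub_left (Commute.sum_left _ _ _ fun e _ => ?_)
    exact (hEE _ _ _ _).mul_left (hEE _ _ _ _)
  have hNE' : ∀ a b c d, Commute (N a b)ᴴ (E c d) := by
    intro a b c d
    have := congrArg conjTranspose (hNE a b d c).eq
    rw [conjTranspose_mul (N a b), conjTranspose_mul (E d c), hEH] at this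
    exact this.symm
  have hrN : ∀ a b, r * N a b = ∑ e, (E a e * r * E e b - r * (E a e * E e b)) := by
    intro a b
    simp only [hN, mul_sub, hrW, Finset.sum_sub_distrib, Finset.mul_sum]
  have hN0 : ∀ a b, N a b = 0 := by
    intro a b
    have h1 : ((h * N a b)ᴴ * (h * N a b)).trace = 0 := by
      rw [conjTranspose_mul, hh, show (N a b)ᴴ * h * (h * N a b) = (N a b)ᴴ * (h * h * N a b) by
        noncomm_ring, hr, hrN, Finset.mul_sum, trace_sum]
      refine Finset.sum_eq_zero fun e _ => ?_
      rw [mul_sub, trace_sub, sub_eq_zero]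
      calc ((N a b)ᴴ * (E a e * r * E e b)).trace
          = (((N a b)ᴴ * E a e * r) * E e b).trace := by congr 1; noncomm_ring
        _ = (E e b * ((N a b)ᴴ * E a e * r)).trace := trace_mul_comm _ _
        _ = (E e b * (N a b)ᴴ * E a e * r).trace := by congr 1; noncomm_ring
        _ = (E a e * E e b * (N a b)ᴴ * r).trace := by
            congr 2
            rw [mul_assoc, (hNE' a b a e).eq, ← mul_assoc, (hEE a e e b).eq]
        _ = ((E a e * E e b) * ((N a b)ᴴ * r)).trace := by congr 1; noncomm_ring
        _ = (((N a b)ᴴ * r) * (E a e * E e b)).trace := trace_mul_comm _ _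
        _ = _ := by congr 1; noncomm_ring
    have h2 := trace_conjTranspose_mul_self_eq_zero_iff.1 h1
    have h3 : P * N a b = N a b := by
      simp only [hN, mul_sub, hPW, Finset.mul_sum, ← mul_assoc, hPE]
    rw [← h3, ← hP2, mul_assoc, h2, mul_zero]
  set C : α → α → Matrix β β ℂ := fun a b => r * E a b - E a b * r with hC
  have hCE : ∀ a b, ∑ e, C a e * E e b = 0 := by
    intro a b
    have := hrN a b
    rw [hN0, mul_zero] at this
    rw [← neg_eq_zero, ← Finset.sum_neg_distrib, this]
    refine Finset.sum_congr rfl fun e _ => ?_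
    simp only [hC]; noncomm_ring
  have hrH : rᴴ = r := by rw [← hr, conjTranspose_mul, hh]
  have hCH : ∀ a b, (C a b)ᴴ = - C b a := by
    intro a b; simp only [hC, conjTranspose_sub, conjTranspose_mul, hEH, hrH, neg_sub]
  have hEC : ∀ a b, ∑ e, E a e * C e b = 0 := by
    intro a b
    have := congrArg conjTranspose (hCE b a)
    simp only [conjTranspose_sum, conjTranspose_mul, hEH, hCH, conjTranspose_zero, mul_neg,
      Finset.sum_neg_distrib, neg_eq_zero] at this
    exact this
  have hC0 : ∀ a b, C a b = 0 := by
    have : ∑ i ∈ (Finset.univ : Finset (α × α)), ((C i.1 i.2)ᴴ * C i.1 i.2).trace = 0 := by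
      have e1 : ∀ a b, ((C a b)ᴴ * C a b).trace =
          (C b a * E a b * r).trace - (r * (E a b * C b a)).trace := by
        intro a b
        rw [hCH]
        have : (r * (E a b * C b a)).trace = (C b a * (r * E a b)).trace := by
          rw [← mul_assoc, trace_mul_comm]
        rw [this, ← trace_sub]
        congr 1
        conv_lhs => rw [show C a b = r * E a b - E a b * r from rfl]
        noncomm_ring
      rw [← Finset.univ_product_univ, Finset.sum_product]
      simp only [e1, Finset.sum_sub_distrib]
      rw [Finset.sum_comm]
      have e2 : ∀ y, ∑ x, (C y x * E x y * r).trace = 0 := by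
        intro y; rw [← trace_sum, ← Finset.sum_mul, hCE, zero_mul, trace_zero]
      have e3 : ∀ x, ∑ y, (r * (E x y * C y x)).trace = 0 := by
        intro y; rw [← trace_sum, ← Finset.mul_sum, hEC, mul_zero, trace_zero]
      simp only [e2, e3]; simp
    intro a b
    exact nub_trace_zero_of_sum _ (fun i : α × α => C i.1 i.2) this (a, b) (Finset.mem_univ _)
  have hrE : ∀ a b, r * E a b = E a b * r := fun a b => sub_eq_zero.1 (hC0 a b)
  intro a b c d
  show R a b * R c d = R c d * R a b
  rw [hRE a b, hRE c d,
    show h * E a b * h * (h * E c d * h) = h * E a b * (h * h * E c d) * h by noncomm_ring,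
    show h * E c d * h * (h * E a b * h) = h * E c d * (h * h * E a b) * h by noncomm_ring,
    hr, hrE, hrE, show h * E a b * (E c d * r) * h = h * (E a b * E c d) * r * h by noncomm_ring,
    (hEE a b c d).eq]
  noncomm_ring

end PartA


set_option linter.unusedSectionVars false

section PartB
variable {n m κ : Type*} [Fintype n] [DecidableEq n] [Fintype m] [DecidableEq m] [Fintype κ]

open scoped MatrixOrder in
theorem nub_psd_sqrt {σ : Matrix n n ℂ} (hσ : σ.PosSemidef) : ∃ B : Matrix n n ℂ, σ = Bᴴ * B :=
  CStarAlgebra.nonneg_iff_eq_star_mul_self.mp hσ.nonneg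

theorem nub_tr_nonneg {σ : Matrix n n ℂ} (hσ : σ.PosSemidef) (L : Matrix m n ℂ) :
    0 ≤ (σ * (Lᴴ * L)).trace.re := by
  have h1 : (σ * (Lᴴ * L)).trace = (L * σ * Lᴴ).trace := by
    rw [← Matrix.mul_assoc, trace_mul_comm, ← Matrix.mul_assoc]
  rw [h1]
  exact (Complex.le_def.1 (hσ.mul_mul_conjTranspose_same L).trace_nonneg).1

theorem nub_tr_zero {σ : Matrix n n ℂ} (hσ : σ.PosSemidef) (L : Matrix m n ℂ)
    (h : (σ * (Lᴴ * L)).trace.re = 0) : L * σ = 0 := by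
  have h1 : (σ * (Lᴴ * L)).trace = (L * σ * Lᴴ).trace := by
    rw [← Matrix.mul_assoc, trace_mul_comm, ← Matrix.mul_assoc]
  have hp := hσ.mul_mul_conjTranspose_same L
  rw [h1] at h
  have h0 : (L * σ * Lᴴ).trace = 0 :=
    Complex.ext h (Complex.le_def.1 hp.trace_nonneg).2.symm
  have h2 := hp.trace_eq_zero_iff.1 h0
  obtain ⟨B, hB⟩ := nub_psd_sqrt hσ
  have h3 : (B * Lᴴ)ᴴ * (B * Lᴴ) = 0 := by
    rw [← h2, hB, conjTranspose_mul, conjTranspose_conjTranspose]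
    simp only [Matrix.mul_assoc]
  have h4 : B * Lᴴ = 0 := by
    apply trace_conjTranspose_mul_self_eq_zero_iff.1; rw [h3, trace_zero]
  have h5 : L * Bᴴ = 0 := by
    have := congrArg conjTranspose h4
    simpa [conjTranspose_mul] using this
  rw [hB, ← Matrix.mul_assoc, h5, Matrix.zero_mul]

theorem nub_re_trace_conj (A : Matrix n n ℂ) : (Aᴴ).trace.re = A.trace.re := by
  rw [trace_conjTranspose]; simp

/-- Completing the square. -/
theorem nub_square (ρ σ X0 Δ : Matrix n n ℂ) (s : ℝ) (hρ : ρᴴ = ρ) (hσ : σᴴ = σ)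
    (hs : σ * X0 + (s : ℂ) • (X0 * ρ) = ρ) :
    2 * (ρ * (X0 + Δ)).trace.re - (σ * ((X0 + Δ) * (X0 + Δ)ᴴ)).trace.re
      - s * (ρ * ((X0 + Δ)ᴴ * (X0 + Δ))).trace.re
    = (ρ * X0).trace.re - (σ * (Δ * Δᴴ)).trace.re - s * (ρ * (Δᴴ * Δ)).trace.re := by
  have key : ∀ Z : Matrix n n ℂ, (σ * (X0 * Zᴴ)).trace.re + s * (ρ * (Zᴴ * X0)).trace.re
      = (ρ * Z).trace.re := by
    intro Z
    have h1 : (ρ * Zᴴ).trace.re = (ρ * Z).trace.re := by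
      rw [← nub_re_trace_conj, conjTranspose_mul, conjTranspose_conjTranspose, hρ, trace_mul_comm]
    have h2 : (ρ * (Zᴴ * X0)).trace = (X0 * ρ * Zᴴ).trace := by
      rw [← mul_assoc, trace_mul_comm, mul_assoc]
    have h3 := congrArg (fun M => (M * Zᴴ).trace.re) hs
    simp only [add_mul, trace_add, smul_mul, trace_smul, Complex.add_re, smul_eq_mul,
      Complex.re_ofReal_mul] at h3
    rw [← h1, ← h3, h2, mul_assoc σ]
  have key2 : ∀ Z : Matrix n n ℂ, (σ * (Z * X0ᴴ)).trace.re + s * (ρ * (X0ᴴ * Z)).trace.re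
      = (ρ * Z).trace.re := by
    intro Z
    rw [← key Z, ← nub_re_trace_conj (σ * (Z * X0ᴴ)), ← nub_re_trace_conj (ρ * (X0ᴴ * Z))]
    simp only [conjTranspose_mul, conjTranspose_conjTranspose, hρ, hσ]
    rw [trace_mul_comm _ σ, trace_mul_comm _ ρ]
  have k1 := key Δ
  have k2 := key2 Δ
  have k3 := key X0
  simp only [conjTranspose_add, mul_add, add_mul, trace_add, Complex.add_re]
  linarith

/-- Schwarz defect as a sum of squares. -/
theorem nub_schwarz (τ P : Matrix n n ℂ) (Y : Matrix m m ℂ) (K : κ → Matrix m n ℂ)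
    (hP : ∑ e, (K e)ᴴ * K e = P) (hKP : ∀ e, K e * P = K e) (hPH : Pᴴ = P)
    (X : Matrix n n ℂ) (hX : X = ∑ e, (K e)ᴴ * Y * K e) :
    ((∑ e, K e * τ * (K e)ᴴ) * (Yᴴ * Y)).trace =
      (τ * (Xᴴ * X)).trace + ∑ e, (τ * ((Y * K e - K e * X)ᴴ * (Y * K e - K e * X))).trace := by
  have hPX : P * X = X := by
    rw [hX, Finset.mul_sum]
    refine Finset.sum_congr rfl fun e _ => ?_
    have : P * (K e)ᴴ = (K e)ᴴ := by
      have := congrArg conjTranspose (hKP e); rwa [conjTranspose_mul, hPH] at this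
    rw [← Matrix.mul_assoc, ← Matrix.mul_assoc, this]
  have hXH : Xᴴ = ∑ e, (K e)ᴴ * Yᴴ * K e := by
    rw [hX, conjTranspose_sum]
    refine Finset.sum_congr rfl fun e _ => ?_
    simp only [conjTranspose_mul, conjTranspose_conjTranspose, Matrix.mul_assoc]
  have e1 : ∑ e, (Y * K e - K e * X)ᴴ * (Y * K e - K e * X) =
      (∑ e, (K e)ᴴ * (Yᴴ * Y) * K e) - Xᴴ * X := by
    have e2 : ∀ e, (Y * K e - K e * X)ᴴ * (Y * K e - K e * X) =
        (K e)ᴴ * (Yᴴ * Y) * K e - ((K e)ᴴ * Yᴴ * K e) * X - Xᴴ * ((K e)ᴴ * Y * K e)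
          + Xᴴ * ((K e)ᴴ * K e) * X := by
      intro e
      simp only [conjTranspose_sub, conjTranspose_mul, Matrix.sub_mul, Matrix.mul_sub,
        Matrix.mul_assoc]
      abel
    simp only [e2, Finset.sum_add_distrib, Finset.sum_sub_distrib, ← Finset.sum_mul,
      ← Finset.mul_sum, ← hX, ← hXH, hP]
    rw [Matrix.mul_assoc Xᴴ P, hPX]; abel
  rw [← trace_sum, ← Finset.mul_sum, e1, mul_sub, trace_sub, add_sub_cancel,
    Finset.sum_mul, Finset.mul_sum, trace_sum, trace_sum]
  refine Finset.sum_congr rfl fun e _ => ?_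
  rw [Matrix.mul_assoc, Matrix.mul_assoc, trace_mul_comm]
  simp only [Matrix.mul_assoc]

theorem nub_dpi_step (ρ σ P X0 S : Matrix n n ℂ) (Y : Matrix m m ℂ) (K : κ → Matrix m n ℂ)
    (s : ℝ) (hs0 : 0 ≤ s) (hρ : ρ.PosSemidef) (hσ : σ.PosSemidef)
    (hP : ∑ e, (K e)ᴴ * K e = P) (hKP : ∀ e, K e * P = K e) (hPH : Pᴴ = P)
    (hs : σ * X0 + (s : ℂ) • (X0 * ρ) = ρ)
    (hs1 : (∑ e, K e * σ * (K e)ᴴ) * Y + (s : ℂ) • (Y * (∑ e, K e * ρ * (K e)ᴴ))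
      = ∑ e, K e * ρ * (K e)ᴴ) (hPX0 : P * X0 = X0) (hSP : S * σ = P) :
    ((∑ e, K e * ρ * (K e)ᴴ) * Y).trace.re ≤ (ρ * X0).trace.re ∧
    (((∑ e, K e * ρ * (K e)ᴴ) * Y).trace.re = (ρ * X0).trace.re →
      ∀ e, Yᴴ * K e = K e * X0ᴴ) := by
  set X := ∑ e, (K e)ᴴ * Y * K e with hX
  have hXH : Xᴴ = ∑ e, (K e)ᴴ * Yᴴ * K e := by
    rw [hX, conjTranspose_sum]
    refine Finset.sum_congr rfl fun e _ => ?_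
    simp only [conjTranspose_mul, conjTranspose_conjTranspose, Matrix.mul_assoc]
  have herm : ∀ τ : Matrix n n ℂ, τᴴ = τ → (∑ e, K e * τ * (K e)ᴴ)ᴴ = ∑ e, K e * τ * (K e)ᴴ := by
    intro τ hτ
    rw [conjTranspose_sum]
    refine Finset.sum_congr rfl fun e _ => ?_
    simp only [conjTranspose_mul, conjTranspose_conjTranspose, Matrix.mul_assoc, hτ]
  have q1 := nub_square ρ σ X0 (X - X0) s hρ.1 hσ.1 hs
  rw [add_sub_cancel] at q1
  have q2 := nub_square _ _ Y 0 s (herm ρ hρ.1) (herm σ hσ.1) hs1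
  simp only [add_zero, zero_mul, mul_zero, trace_zero, Complex.zero_re, sub_zero] at q2
  have q3 := congrArg Complex.re (nub_schwarz ρ P Y K hP hKP hPH X hX)
  have q4 := congrArg Complex.re (nub_schwarz σ P Yᴴ K hP hKP hPH Xᴴ hXH)
  simp only [Complex.add_re, Complex.re_sum, conjTranspose_conjTranspose Y,
    conjTranspose_conjTranspose X] at q3 q4
  have q5 : ((∑ e, K e * ρ * (K e)ᴴ) * Y).trace.re = (ρ * X).trace.re := by
    rw [hX, Finset.sum_mul, Finset.mul_sum, trace_sum, trace_sum]
    congr 1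
    refine Finset.sum_congr rfl fun e _ => ?_
    rw [Matrix.mul_assoc, Matrix.mul_assoc, trace_mul_comm]
    simp only [Matrix.mul_assoc]
  have n1 : ∀ e, 0 ≤ (ρ * ((Y * K e - K e * X)ᴴ * (Y * K e - K e * X))).trace.re :=
    fun e => nub_tr_nonneg hρ _
  have n2 : ∀ e, 0 ≤ (σ * ((Yᴴ * K e - K e * Xᴴ)ᴴ * (Yᴴ * K e - K e * Xᴴ))).trace.re :=
    fun e => nub_tr_nonneg hσ _
  have n3 := nub_tr_nonneg hρ (X - X0)
  have n4 := nub_tr_nonneg hσ (X - X0)ᴴ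
  rw [conjTranspose_conjTranspose] at n4
  have N1 := Finset.sum_nonneg fun e (_ : e ∈ Finset.univ) => n1 e
  have N2 := Finset.sum_nonneg fun e (_ : e ∈ Finset.univ) => n2 e
  have N1' := mul_nonneg hs0 N1
  have n3' := mul_nonneg hs0 n3
  rw [q3, q4, q5] at q2
  rw [mul_add] at q2
  rw [q5]
  refine ⟨by linarith, fun heq e => ?_⟩
  have z1 : (σ * ((X - X0) * (X - X0)ᴴ)).trace.re = 0 := by linarith
  have z2 : ∑ e, (σ * ((Yᴴ * K e - K e * Xᴴ)ᴴ * (Yᴴ * K e - K e * Xᴴ))).trace.re = 0 := by linarith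
  have z3 := (Finset.sum_eq_zero_iff_of_nonneg fun e _ => n2 e).1 z2 e (Finset.mem_univ _)
  have z4 := nub_tr_zero hσ _ z3
  have z5 : (X - X0)ᴴ * σ = 0 := nub_tr_zero hσ (X - X0)ᴴ (by rwa [conjTranspose_conjTranspose])
  have hσS : σ * Sᴴ = P := by
    have := congrArg conjTranspose hSP; rwa [conjTranspose_mul, hPH, hσ.1] at this
  have toP : ∀ L : Matrix m n ℂ, L * σ = 0 → L * P = 0 := by
    intro L hL; rw [← hσS, ← Matrix.mul_assoc, hL, Matrix.zero_mul]
  have toP' : ∀ L : Matrix n n ℂ, L * σ = 0 → L * P = 0 := by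
    intro L hL; rw [← hσS, ← Matrix.mul_assoc, hL, Matrix.zero_mul]
  have y1 := toP _ z4
  have y2 := toP' _ z5
  have hXP : Xᴴ * P = Xᴴ := by
    rw [hXH, Finset.sum_mul]
    refine Finset.sum_congr rfl fun e _ => ?_
    rw [Matrix.mul_assoc, hKP]
  have hX0P : X0ᴴ * P = X0ᴴ := by
    have := congrArg conjTranspose hPX0; rwa [conjTranspose_mul, hPH] at this
  rw [Matrix.sub_mul, Matrix.mul_assoc, Matrix.mul_assoc, hKP, hXP, sub_eq_zero] at y1
  rw [conjTranspose_sub, Matrix.sub_mul, hXP, hX0P, sub_eq_zero] at y2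
  rw [y1, y2]

end PartB


section PartC
open Filter Topology Set

theorem nub_F_deriv {I : Type*} [Fintype I] (w p q : I → ℝ) (hp : ∀ i, 0 ≤ p i)
    (hw : ∀ i, w i ≠ 0 → 0 < p i ∧ 0 < q i) (s : ℝ) (hs : 0 ≤ s) :
    HasDerivAt (fun s => ∑ i, w i * Real.log (q i + s * p i)) (∑ i, w i * (p i / (q i + s * p i))) s := by
  apply HasDerivAt.fun_sum
  intro i _
  by_cases h : w i = 0
  · simp only [h, zero_mul]; exact hasDerivAt_const _ _
  · obtain ⟨h1, h2⟩ := hw i h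
    have h3 : HasDerivAt (fun s => q i + s * p i) (p i) s := by
      simpa using ((hasDerivAt_id s).mul_const (p i)).const_add (q i)
    exact (h3.log (by positivity)).const_mul (w i)

theorem nub_F_lim {I : Type*} [Fintype I] (w p q : I → ℝ)
    (hw : ∀ i, w i ≠ 0 → 0 < p i ∧ 0 < q i) :
    Tendsto (fun s => ∑ i, w i * Real.log (q i + s * p i) - (∑ i, w i) * Real.log s) atTop
      (𝓝 (∑ i, w i * Real.log (p i))) := by
  have : ∀ i, Tendsto (fun s => w i * Real.log (q i + s * p i) - w i * Real.log s) atTop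
      (𝓝 (w i * Real.log (p i))) := by
    intro i
    by_cases h : w i = 0
    · simp [h]
    · obtain ⟨h1, h2⟩ := hw i h
      have h3 : Tendsto (fun s : ℝ => q i / s + p i) atTop (𝓝 (0 + p i)) :=
        (tendsto_const_nhds.div_atTop tendsto_id).add_const _
      rw [zero_add] at h3
      have h4 := (h3.log h1.ne').const_mul (w i)
      refine h4.congr' ?_
      filter_upwards [eventually_gt_atTop 0] with s hs
      rw [← mul_sub, ← Real.log_div (by positivity) hs.ne']
      congr 2
      field_simp
  have h := tendsto_finset_sum Finset.univ fun i _ => this i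
  refine h.congr fun s => ?_
  rw [Finset.sum_sub_distrib, Finset.sum_mul]

theorem nub_calculus {I J : Type*} [Fintype I] [Fintype J] (w p q : I → ℝ) (w' p' q' : J → ℝ)
    (hp : ∀ i, 0 ≤ p i) (hw : ∀ i, w i ≠ 0 → 0 < p i ∧ 0 < q i)
    (hp' : ∀ i, 0 ≤ p' i) (hw' : ∀ i, w' i ≠ 0 → 0 < p' i ∧ 0 < q' i)
    (hsum : ∑ i, w i = ∑ i, w' i)
    (hle : ∀ s, 0 ≤ s → ∑ i, w' i * (p' i / (q' i + s * p' i)) ≤ ∑ i, w i * (p i / (q i + s * p i)))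
    (heq : ∑ i, w i * Real.log (p i) - ∑ i, w i * Real.log (q i) =
      ∑ i, w' i * Real.log (p' i) - ∑ i, w' i * Real.log (q' i)) :
    ∀ s, 0 ≤ s → ∑ i, w' i * (p' i / (q' i + s * p' i)) = ∑ i, w i * (p i / (q i + s * p i)) := by
  set G : ℝ → ℝ := fun s => ∑ i, w i * Real.log (q i + s * p i) -
    ∑ i, w' i * Real.log (q' i + s * p' i) with hG
  have hd : ∀ s, 0 ≤ s → HasDerivAt G (∑ i, w i * (p i / (q i + s * p i)) -
      ∑ i, w' i * (p' i / (q' i + s * p' i))) s := fun s hs =>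
    (nub_F_deriv w p q hp hw s hs).sub (nub_F_deriv w' p' q' hp' hw' s hs)
  have hmono : MonotoneOn G (Ici 0) := by
    apply monotoneOn_of_deriv_nonneg (convex_Ici 0)
    · exact fun s hs => (hd s hs).continuousAt.continuousWithinAt
    · intro s hs
      rw [interior_Ici] at hs
      exact (hd s (le_of_lt hs)).differentiableAt.differentiableWithinAt
    · intro s hs
      rw [interior_Ici] at hs
      rw [(hd s (le_of_lt hs)).deriv, sub_nonneg]
      exact hle s (le_of_lt hs)
  have hlim : Tendsto G atTop (𝓝 (G 0)) := by
    have h := (nub_F_lim w p q hw).sub (nub_F_lim w' p' q' hw')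
    have e : ∑ i, w i * Real.log (p i) - ∑ i, w' i * Real.log (p' i) = G 0 := by
      simp only [hG, zero_mul, add_zero]; linarith
    rw [e] at h
    refine h.congr fun s => ?_
    rw [hsum, sub_sub_sub_cancel_right]
  have hconst : ∀ s ∈ Ici (0 : ℝ), G s = G 0 := by
    intro s hs
    refine le_antisymm ?_ (hmono self_mem_Ici hs hs)
    refine ge_of_tendsto hlim ?_
    filter_upwards [eventually_ge_atTop s] with t ht
    exact hmono hs (le_trans hs ht : (0:ℝ) ≤ t) ht
  intro s hs
  have h1 := (hd s hs).hasDerivWithinAt (s := Ici 0)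
  have h2 : HasDerivWithinAt G 0 (Ici 0) s :=
    (hasDerivWithinAt_const s (Ici 0) (G 0)).congr hconst (hconst s hs)
  have h3 := (uniqueDiffOn_Ici (0:ℝ) s hs).eq_deriv _ h1 h2
  linarith

end PartC

set_option linter.unusedSectionVars false

section PartD
open Filter Topology
variable {n : Type*} [Fintype n] [DecidableEq n]

theorem nub_spec {A : Matrix n n ℂ} (hA : A.IsHermitian) :
    ∃ U : Matrix n n ℂ, Uᴴ * U = 1 ∧ U * Uᴴ = 1 ∧
      A = U * diagonal (fun i => (hA.eigenvalues i : ℂ)) * Uᴴ := by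
  refine ⟨hA.eigenvectorUnitary, ?_, ?_, ?_⟩
  · exact Unitary.coe_star_mul_self hA.eigenvectorUnitary
  · exact Unitary.coe_mul_star_self hA.eigenvectorUnitary
  · have h := hA.spectral_theorem
    rw [Unitary.conjStarAlgAut_apply] at h
    exact h

theorem nub_sylvester (ρ σ Ψ Φ : Matrix n n ℂ) (p q : n → ℝ)
    (hp : ∀ i, 0 ≤ p i) (hq : ∀ i, 0 ≤ q i)
    (hΨ : Ψᴴ * Ψ = 1) (hΦ : Φᴴ * Φ = 1) (hΦ' : Φ * Φᴴ = 1)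
    (hρ : ρ = Ψ * diagonal (fun i => (p i : ℂ)) * Ψᴴ)
    (hσ : σ = Φ * diagonal (fun i => (q i : ℂ)) * Φᴴ)
    (hsupp : ∀ i j, q j = 0 → (p i : ℂ) * (Ψᴴ * Φ) i j = 0) :
    ∃ X : ℝ → Matrix n n ℂ,
      (∀ s, 0 ≤ s → σ * X s + (s : ℂ) • (X s * ρ) = ρ) ∧
      (∀ s, Φ * diagonal (fun i => if q i = 0 then (0 : ℂ) else 1) * Φᴴ * X s = X s) ∧
      (∀ s, 0 ≤ s → (ρ * X s).trace.re =
        ∑ i, ∑ j, (p i * Complex.normSq ((Ψᴴ * Φ) i j)) * (p i / (q j + s * p i))) ∧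
      Tendsto X (𝓝[>] 0) (𝓝 (X 0)) := by
  set m := Ψᴴ * Φ with hm
  set x : ℝ → Matrix n n ℂ := fun s => Matrix.of fun j i =>
    (p i : ℂ) * star (m i j) / ((q j + s * p i : ℝ) : ℂ) with hx
  have hsupp' : ∀ i j, q j = 0 → (p i : ℂ) * star (m i j) = 0 := by
    intro i j h
    have := hsupp i j h
    rcases mul_eq_zero.1 this with h | h <;> simp [h]
  refine ⟨fun s => Φ * x s * Ψᴴ, ?_, ?_, ?_, ?_⟩
  · intro s hs
    have e1 : diagonal (fun i => (q i : ℂ)) * x s + (s : ℂ) • (x s * diagonal (fun i => (p i : ℂ)))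
        = Φᴴ * Ψ * diagonal (fun i => (p i : ℂ)) := by
      have hmH : Φᴴ * Ψ = mᴴ := by rw [hm, conjTranspose_mul, conjTranspose_conjTranspose]
      rw [hmH]
      ext j i
      simp only [Matrix.add_apply, Matrix.smul_apply, diagonal_mul, mul_diagonal, hx, of_apply,
        conjTranspose_apply, smul_eq_mul]
      by_cases h : q j + s * p i = 0
      · have hq0 : q j = 0 := by
          have := mul_nonneg hs (hp i); have := hq j; linarith
        have := hsupp' i j hq0
        rw [mul_comm (star (m i j)), this]; simp
      · have h' : ((q j + s * p i : ℝ) : ℂ) ≠ 0 := by exact_mod_cast h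
        field_simp
        push_cast; ring
    have : σ * (Φ * x s * Ψᴴ) + (s : ℂ) • (Φ * x s * Ψᴴ * ρ) =
        Φ * (diagonal (fun i => (q i : ℂ)) * (Φᴴ * Φ) * x s + 
          (s : ℂ) • (x s * (Ψᴴ * Ψ) * diagonal (fun i => (p i : ℂ)))) * Ψᴴ := by
      rw [hσ, hρ]
      simp only [Matrix.mul_add, Matrix.add_mul, Matrix.mul_smul, Matrix.smul_mul, Matrix.mul_assoc]
    rw [this, hΨ, hΦ, Matrix.mul_one, Matrix.mul_one, e1, hρ]
    rw [show Φ * (Φᴴ * Ψ * diagonal (fun i => (p i : ℂ))) * Ψᴴ =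
      (Φ * Φᴴ) * (Ψ * diagonal (fun i => (p i : ℂ)) * Ψᴴ) by simp only [Matrix.mul_assoc], hΦ',
      Matrix.one_mul]
  · intro s
    have e1 : diagonal (fun i => if q i = 0 then (0 : ℂ) else 1) * x s = x s := by
      ext j i
      simp only [diagonal_mul, hx, of_apply]
      split_ifs with h
      · rw [hsupp' i j h]; simp
      · simp
    calc _ = Φ * (diagonal (fun i => if q i = 0 then (0 : ℂ) else 1) * (Φᴴ * Φ) * x s) * Ψᴴ := by
          simp only [Matrix.mul_assoc]
      _ = _ := by rw [hΦ, Matrix.mul_one, e1]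
  · intro s hs
    have : (ρ * (Φ * x s * Ψᴴ)).trace = (diagonal (fun i => (p i : ℂ)) * (m * x s)).trace := by
      rw [hρ, show Ψ * diagonal (fun i => (p i : ℂ)) * Ψᴴ * (Φ * x s * Ψᴴ) =
        (Ψ * (diagonal (fun i => (p i : ℂ)) * (m * x s))) * Ψᴴ by
          simp only [hm, Matrix.mul_assoc], trace_mul_comm, ← Matrix.mul_assoc, hΨ, Matrix.one_mul]
    rw [this, trace, Complex.re_sum]
    refine Finset.sum_congr rfl fun i _ => ?_
    rw [diag_apply, diagonal_mul, mul_apply, Finset.mul_sum, Complex.re_sum]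
    refine Finset.sum_congr rfl fun j _ => ?_
    simp only [hx, of_apply]
    have : (p i : ℂ) * (m i j * ((p i : ℂ) * star (m i j) / ((q j + s * p i : ℝ) : ℂ))) =
        (((p i * Complex.normSq (m i j)) * (p i / (q j + s * p i)) : ℝ) : ℂ) := by
      push_cast
      rw [← Complex.mul_conj]
      simp only [Complex.star_def]
      ring
    rw [this, Complex.ofReal_re]
  · have hxt : Tendsto x (𝓝[>] 0) (𝓝 (x 0)) := by
      refine tendsto_pi_nhds.2 fun j => tendsto_pi_nhds.2 fun i => ?_
      simp only [hx, of_apply]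
      by_cases h : q j = 0
      · simp only [hsupp' i j h, zero_div]; exact tendsto_const_nhds
      · apply tendsto_nhdsWithin_of_tendsto_nhds
        have hc : Continuous fun s : ℝ => ((q j + s * p i : ℝ) : ℂ) := by fun_prop
        refine Tendsto.div tendsto_const_nhds (hc.tendsto 0) ?_
        simpa using h
    have hc : Continuous fun M : Matrix n n ℂ => Φ * M * Ψᴴ := by fun_prop
    exact (hc.tendsto (x 0)).comp hxt

end PartD

section PartD2
open Filter Topology
variable {α β : Type*} [Fintype α] [DecidableEq α] [Fintype β] [DecidableEq β]

theorem nub_ptraceLeft_conj {β₁ : Type*} [Fintype β₁] (A : Matrix β₁ β ℂ) (B : Matrix β β₁ ℂ)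
    (M : Matrix (α × β) (α × β) ℂ) :
    ptraceLeft (((1 : Matrix α α ℂ) ⊗ₖ A) * M * ((1 : Matrix α α ℂ) ⊗ₖ B)) = A * ptraceLeft M * B := by
  ext b b'
  simp only [ptraceLeft, of_apply, mul_apply, kroneckerMap_apply, Fintype.sum_prod_type, one_apply,
    ite_mul, one_mul, zero_mul, Finset.sum_ite_eq, Finset.sum_ite_eq', Finset.mem_univ, if_true,
    mul_ite, mul_zero, Finset.sum_ite_irrel, Finset.sum_const_zero]
  rw [Finset.sum_comm]
  refine Finset.sum_congr rfl fun c _ => ?_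
  rw [← Finset.sum_mul]
  congr 1
  rw [Finset.sum_comm]
  refine Finset.sum_congr rfl fun d _ => ?_
  rw [Finset.mul_sum]

theorem nub_ptraceLeft_psd {ρ : Matrix (α × β) (α × β) ℂ} (hρ : ρ.PosSemidef) :
    (ptraceLeft ρ).PosSemidef := by
  have : ptraceLeft ρ = ∑ a, ρ.submatrix (fun b => (a, b)) (fun b => (a, b)) := by
    ext b b'
    simp [ptraceLeft, Matrix.sum_apply]
  rw [this]
  exact posSemidef_sum _ fun a _ => hρ.submatrix _

/-- Spectral data of a bipartite state. -/
structure NubSpec (ρ : Matrix (α × β) (α × β) ℂ) (w p q : (α × β) × (α × β) → ℝ)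
    (X : ℝ → Matrix (α × β) (α × β) ℂ) (h g P : Matrix β β ℂ) : Prop where
  p_nonneg : ∀ i, 0 ≤ p i
  w_pos : ∀ i, w i ≠ 0 → 0 < p i ∧ 0 < q i
  w_sum : ∑ i, w i = 1
  ent_p : ∑ i, w i * Real.log (p i) = - (Real.log 2 * vnEntropy ρ)
  ent_q : ∑ i, w i * Real.log (q i) = - (Real.log 2 * vnEntropy (ptraceLeft ρ))
  h_herm : hᴴ = h
  g_herm : gᴴ = g
  h_sq : h * h = ptraceLeft ρ
  h_g : h * g = P
  g_h : g * h = P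
  P_h : P * h = h
  P_g : P * g = g
  syl : ∀ s : ℝ, 0 ≤ s → ((1 : Matrix α α ℂ) ⊗ₖ ptraceLeft ρ) * X s + (s : ℂ) • (X s * ρ) = ρ
  P_X : ∀ s, ((1 : Matrix α α ℂ) ⊗ₖ P) * X s = X s
  tr_X : ∀ s, 0 ≤ s → (ρ * X s).trace.re = ∑ i, w i * (p i / (q i + s * p i))
  lim_X : Tendsto X (𝓝[>] 0) (𝓝 (X 0))

theorem nub_spectral (ρ : Matrix (α × β) (α × β) ℂ) (hρ : IsDensityMatrix ρ) :
    ∃ (w p q : (α × β) × (α × β) → ℝ) (X : ℝ → Matrix (α × β) (α × β) ℂ) (h g P : Matrix β β ℂ),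
      NubSpec ρ w p q X h g P := by
  have hr := nub_ptraceLeft_psd hρ.1
  set r := ptraceLeft ρ with hrdef
  obtain ⟨Ψ, hΨ, hΨ', hρs⟩ := nub_spec hρ.1.1
  obtain ⟨U, hU, hU', hrs⟩ := nub_spec hr.1
  set p0 := hρ.1.1.eigenvalues with hp0
  set q0 := hr.1.eigenvalues with hq0
  have hp0n : ∀ i, 0 ≤ p0 i := hρ.1.eigenvalues_nonneg
  have hq0n : ∀ i, 0 ≤ q0 i := hr.eigenvalues_nonneg
  set Φ : Matrix (α × β) (α × β) ℂ := (1 : Matrix α α ℂ) ⊗ₖ U with hΦdef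
  have hΦH : Φᴴ = (1 : Matrix α α ℂ) ⊗ₖ Uᴴ := by
    rw [hΦdef, conjTranspose_kronecker, conjTranspose_one]
  have hΦ : Φᴴ * Φ = 1 := by
    rw [hΦH, hΦdef, ← mul_kronecker_mul, hU, Matrix.one_mul, one_kronecker_one]
  have hΦ' : Φ * Φᴴ = 1 := by
    rw [hΦH, hΦdef, ← mul_kronecker_mul, hU', Matrix.one_mul, one_kronecker_one]
  have hdiag : ∀ f : β → ℂ, (1 : Matrix α α ℂ) ⊗ₖ (U * diagonal f * Uᴴ) =
      Φ * diagonal (fun i : α × β => f i.2) * Φᴴ := by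
    intro f
    have : diagonal (fun i : α × β => f i.2) = (1 : Matrix α α ℂ) ⊗ₖ diagonal f := by
      rw [← diagonal_one, diagonal_kronecker_diagonal]; simp
    rw [this, hΦH, hΦdef, ← mul_kronecker_mul, ← mul_kronecker_mul, Matrix.one_mul, Matrix.one_mul]
  set m := Ψᴴ * Φ with hm
  set w0 : α × β → α × β → ℝ := fun i j => p0 i * Complex.normSq (m i j) with hw0
  have hw0n : ∀ i j, 0 ≤ w0 i j := fun i j => mul_nonneg (hp0n i) (Complex.normSq_nonneg _)
  have hmm : m * mᴴ = 1 := by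
    rw [hm, conjTranspose_mul, conjTranspose_conjTranspose,
      show Ψᴴ * Φ * (Φᴴ * Ψ) = Ψᴴ * (Φ * Φᴴ) * Ψ by simp only [Matrix.mul_assoc], hΦ',
      Matrix.mul_one, hΨ]
  have hrow : ∀ i, ∑ j, w0 i j = p0 i := by
    intro i
    have h1 := congrFun (congrFun hmm i) i
    simp only [mul_apply, conjTranspose_apply, one_apply_eq, Complex.star_def, Complex.mul_conj] at h1
    have h2 : ∑ j, Complex.normSq (m i j) = 1 := by exact_mod_cast h1
    simp only [hw0, ← Finset.mul_sum, h2, mul_one]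
  have hcol : ∀ b, ∑ a, ∑ i, w0 i (a, b) = q0 b := by
    intro b
    have h1 : mᴴ * diagonal (fun i => (p0 i : ℂ)) * m = Φᴴ * ρ * Φ := by
      conv_rhs => rw [hρs]
      rw [hm, conjTranspose_mul, conjTranspose_conjTranspose]
      simp only [Matrix.mul_assoc]
    have h2 : ptraceLeft (Φᴴ * ρ * Φ) = diagonal (fun i => (q0 i : ℂ)) := by
      rw [hΦH, hΦdef, nub_ptraceLeft_conj, ← hrdef, hrs,
        show Uᴴ * (U * diagonal (fun i => (q0 i : ℂ)) * Uᴴ) * U =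
          (Uᴴ * U) * diagonal (fun i => (q0 i : ℂ)) * (Uᴴ * U) by simp only [Matrix.mul_assoc], hU,
        Matrix.one_mul, Matrix.mul_one]
    have h3 := congrFun (congrFun h2 b) b
    rw [← h1] at h3
    simp only [ptraceLeft, of_apply, diagonal_apply_eq, mul_apply (M := mᴴ * _), mul_diagonal,
      conjTranspose_apply] at h3
    have h4 : ∀ a i, star (m i (a, b)) * (p0 i : ℂ) * m i (a, b) = ((w0 i (a, b) : ℝ) : ℂ) := by
      intro a i
      simp only [hw0]; push_cast; rw [← Complex.mul_conj, Complex.star_def]; ring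
    simp only [h4] at h3
    exact_mod_cast h3
  have hwq : ∀ i j, w0 i j ≠ 0 → 0 < p0 i ∧ 0 < q0 j.2 := by
    intro i j hne
    refine ⟨lt_of_le_of_ne (hp0n i) fun h => hne (by simp [hw0, ← h]), ?_⟩
    have hpos : 0 < w0 i j := lt_of_le_of_ne (hw0n i j) (Ne.symm hne)
    rw [← hcol j.2]
    refine lt_of_lt_of_le hpos ?_
    refine le_trans ?_ (Finset.single_le_sum (f := fun a => ∑ i, w0 i (a, j.2))
      (fun a _ => Finset.sum_nonneg fun i _ => hw0n _ _) (Finset.mem_univ j.1))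
    exact Finset.single_le_sum (f := fun i => w0 i (j.1, j.2)) (fun i _ => hw0n _ _)
      (Finset.mem_univ i)
  have hsupp : ∀ i (j : α × β), q0 j.2 = 0 → (p0 i : ℂ) * m i j = 0 := by
    intro i j h0
    by_contra hne
    have : w0 i j ≠ 0 := by
      simp only [ne_eq, mul_eq_zero, not_or, Complex.ofReal_eq_zero] at hne
      simp only [hw0, ne_eq, mul_eq_zero, not_or, Complex.normSq_eq_zero]
      exact hne
    have := (hwq i j this).2
    linarith
  obtain ⟨X, hX1, hX2, hX3, hX4⟩ := nub_sylvester ρ ((1 : Matrix α α ℂ) ⊗ₖ r) Ψ Φ p0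
    (fun j => q0 j.2) hp0n (fun j => hq0n j.2) hΨ hΦ hΦ' hρs
    (by conv_lhs => rw [hrs]
        exact hdiag _) hsupp
  have hmul : ∀ f f' : β → ℂ, U * diagonal f * Uᴴ * (U * diagonal f' * Uᴴ) =
      U * diagonal (fun i => f i * f' i) * Uᴴ := by
    intro f f'
    rw [show U * diagonal f * Uᴴ * (U * diagonal f' * Uᴴ) =
      U * (diagonal f * (Uᴴ * U) * diagonal f') * Uᴴ by simp only [Matrix.mul_assoc], hU,
      Matrix.mul_one, diagonal_mul_diagonal]
  have hherm : ∀ f : β → ℝ, (U * diagonal (fun i => (f i : ℂ)) * Uᴴ)ᴴ =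
      U * diagonal (fun i => (f i : ℂ)) * Uᴴ := by
    intro f
    rw [conjTranspose_mul, conjTranspose_mul, conjTranspose_conjTranspose, diagonal_conjTranspose,
      Matrix.mul_assoc]
    congr 3
    ext i; simp
  have hq0s : ∀ i, q0 i ≠ 0 → (Real.sqrt (q0 i) : ℂ) ≠ 0 := by
    intro i hi
    have := lt_of_le_of_ne (hq0n i) (Ne.symm hi)
    exact_mod_cast (Real.sqrt_pos.2 this).ne'
  refine ⟨fun i => w0 i.1 i.2, fun i => p0 i.1, fun i => q0 i.2.2, X,
    U * diagonal (fun i => ((Real.sqrt (q0 i) : ℝ) : ℂ)) * Uᴴ,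
    U * diagonal (fun i => (((Real.sqrt (q0 i))⁻¹ : ℝ) : ℂ)) * Uᴴ,
    U * diagonal (fun i => if q0 i = 0 then (0 : ℂ) else 1) * Uᴴ,
    fun i => hp0n _, fun i => hwq _ _, ?_, ?_, ?_, hherm _, hherm _, ?_, ?_, ?_, ?_, ?_, hX1, ?_, ?_,
    hX4⟩
  · rw [Fintype.sum_prod_type]
    simp only [hrow]
    have := hρ.2.symm.trans hρ.1.1.trace_eq_sum_eigenvalues
    have h2 : (1 : ℂ) = ((∑ i, p0 i : ℝ) : ℂ) := by rw [this]; push_cast; rfl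
    exact_mod_cast h2.symm
  · rw [Fintype.sum_prod_type]
    simp only [← Finset.sum_mul, hrow]
    rw [vnEntropy, dif_pos hρ.1.1, mul_neg, neg_neg, Finset.mul_sum]
    refine Finset.sum_congr rfl fun i _ => ?_
    rw [Real.logb]
    have : Real.log 2 ≠ 0 := (Real.log_pos one_lt_two).ne'
    field_simp
    rfl
  · rw [Fintype.sum_prod_type, Finset.sum_comm, Fintype.sum_prod_type, Finset.sum_comm]
    simp only [← Finset.sum_mul, hcol]
    rw [vnEntropy, dif_pos hr.1, mul_neg, neg_neg, Finset.mul_sum]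
    refine Finset.sum_congr rfl fun i _ => ?_
    rw [Real.logb]
    have : Real.log 2 ≠ 0 := (Real.log_pos one_lt_two).ne'
    field_simp
    rfl
  · conv_rhs => rw [← hrdef, hrs]
    rw [hmul]
    congr 3
    ext i
    rw [← Complex.ofReal_mul, Real.mul_self_sqrt (hq0n i)]
  · rw [hmul]
    congr 3
    ext i
    split_ifs with h
    · simp [h]
    · push_cast; rw [mul_inv_cancel₀ (hq0s i h)]
  · rw [hmul]
    congr 3
    ext i
    split_ifs with h
    · simp [h]
    · push_cast; rw [inv_mul_cancel₀ (hq0s i h)]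
  · rw [hmul]
    congr 3
    ext i
    split_ifs with h <;> simp [h]
  · rw [hmul]
    congr 3
    ext i
    split_ifs with h <;> simp [h]
  · intro s
    rw [hdiag]; exact hX2 s
  · intro s hs
    rw [hX3 s hs]
    exact (Fintype.sum_prod_type (fun i : (α × β) × (α × β) =>
      w0 i.1 i.2 * (p0 i.1 / (q0 i.2.2 + s * p0 i.1)))).symm

end PartD2

set_option linter.unusedSectionVars false

section PartE
open Filter Topology
variable {α β β₁ κ : Type*} [Fintype α] [DecidableEq α] [Fintype β] [DecidableEq β]
  [Fintype β₁] [DecidableEq β₁] [Fintype κ]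

theorem NubSpec.P_herm {ρ : Matrix (α × β) (α × β) ℂ} {w p q X h g P}
    (D : NubSpec ρ w p q X h g P) : Pᴴ = P := by
  rw [← D.h_g, conjTranspose_mul, D.h_herm, D.g_herm, D.g_h, D.h_g]

theorem NubSpec.P_r {ρ : Matrix (α × β) (α × β) ℂ} {w p q X h g P}
    (D : NubSpec ρ w p q X h g P) : P * ptraceLeft ρ = ptraceLeft ρ := by
  rw [← D.h_sq, ← mul_assoc, D.P_h]

theorem NubSpec.g_r {ρ : Matrix (α × β) (α × β) ℂ} {w p q X h g P}
    (D : NubSpec ρ w p q X h g P) : g * g * ptraceLeft ρ = P := by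
  rw [← D.h_sq, show g * g * (h * h) = g * (g * h) * h by noncomm_ring, D.g_h, mul_assoc, D.P_h,
    D.g_h]

theorem NubSpec.P_P {ρ : Matrix (α × β) (α × β) ℂ} {w p q X h g P}
    (D : NubSpec ρ w p q X h g P) : P * P = P := by
  have e : P * (h * g) = h * g := by rw [← mul_assoc, D.P_h]
  rwa [D.h_g] at e

theorem NubSpec.P_ρ {ρ : Matrix (α × β) (α × β) ℂ} {w p q X h g P}
    (D : NubSpec ρ w p q X h g P) : ((1 : Matrix α α ℂ) ⊗ₖ P) * ρ = ρ := by
  have h := D.syl 0 le_rfl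
  simp only [Complex.ofReal_zero, zero_smul, add_zero] at h
  conv_lhs => rw [← h]
  rw [← mul_assoc, ← mul_kronecker_mul, D.P_r, one_mul, h]

theorem NubSpec.ρ_P {ρ : Matrix (α × β) (α × β) ℂ} {w p q X h g P}
    (D : NubSpec ρ w p q X h g P) (hρ : ρᴴ = ρ) : ρ * ((1 : Matrix α α ℂ) ⊗ₖ P) = ρ := by
  have h := congrArg conjTranspose D.P_ρ
  rwa [conjTranspose_mul, conjTranspose_kronecker, conjTranspose_one, D.P_herm, hρ] at h

theorem nub_channel_eq {ρ : Matrix (α × β) (α × β) ℂ} (hρ : IsDensityMatrix ρ) {w p q X h g P}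
    (D : NubSpec ρ w p q X h g P) (K : κ → Matrix β₁ β ℂ) (hK : ∑ e, (K e)ᴴ * K e = 1)
    (ρ₁ : Matrix (α × β₁) (α × β₁) ℂ)
    (hρ₁ : ρ₁ = ∑ e, ((1 : Matrix α α ℂ) ⊗ₖ K e) * ρ * ((1 : Matrix α α ℂ) ⊗ₖ K e)ᴴ)
    (heq : vnEntropy (ptraceLeft ρ₁) - vnEntropy ρ₁ = vnEntropy (ptraceLeft ρ) - vnEntropy ρ) :
    ∀ s, 0 ≤ s → ∃ Y : Matrix (α × β₁) (α × β₁) ℂ, ∀ e,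
      Y * ((1 : Matrix α α ℂ) ⊗ₖ (K e * P)) = ((1 : Matrix α α ℂ) ⊗ₖ (K e * P)) * (X s)ᴴ := by
  have hd₁ : IsDensityMatrix ρ₁ := by
    constructor
    · rw [hρ₁]
      exact posSemidef_sum _ fun e _ => hρ.1.mul_mul_conjTranspose_same _
    · have : ∀ e, (((1 : Matrix α α ℂ) ⊗ₖ K e) * ρ * ((1 : Matrix α α ℂ) ⊗ₖ K e)ᴴ).trace =
          (((1 : Matrix α α ℂ) ⊗ₖ ((K e)ᴴ * K e)) * ρ).trace := by
        intro e
        rw [trace_mul_comm, ← Matrix.mul_assoc, conjTranspose_kronecker, ← mul_kronecker_mul,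
          conjTranspose_one, one_mul]
      have h2 : ∑ e, ((1 : Matrix α α ℂ) ⊗ₖ ((K e)ᴴ * K e)) = 1 := by
        have : ∑ e, ((1 : Matrix α α ℂ) ⊗ₖ ((K e)ᴴ * K e)) =
          (1 : Matrix α α ℂ) ⊗ₖ (∑ e, ((K e)ᴴ * K e)) := by
          ext i j
          simp only [Matrix.sum_apply, kroneckerMap_apply, Finset.mul_sum]
        rw [this, hK, one_kronecker_one]
      rw [hρ₁, trace_sum]
      simp only [this]
      rw [← trace_sum, ← Finset.sum_mul, h2, one_mul, hρ.2]
  obtain ⟨w', p', q', X', h', g', P', D'⟩ := nub_spectral ρ₁ hd₁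
  set K' : κ → Matrix (α × β₁) (α × β) ℂ := fun e => (1 : Matrix α α ℂ) ⊗ₖ (K e * P) with hK'
  have hK'eq : ∀ e, K' e = ((1 : Matrix α α ℂ) ⊗ₖ K e) * ((1 : Matrix α α ℂ) ⊗ₖ P) := by
    intro e; simp only [hK']; rw [← mul_kronecker_mul, one_mul]
  have hPH : ((1 : Matrix α α ℂ) ⊗ₖ P)ᴴ = (1 : Matrix α α ℂ) ⊗ₖ P := by
    rw [conjTranspose_kronecker, conjTranspose_one, D.P_herm]
  have hsumP : ∑ e, (K' e)ᴴ * K' e = (1 : Matrix α α ℂ) ⊗ₖ P := by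
    have h1 : ∀ e, (K' e)ᴴ * K' e = (1 : Matrix α α ℂ) ⊗ₖ (P * ((K e)ᴴ * K e) * P) := by
      intro e
      simp only [hK']
      rw [conjTranspose_kronecker, conjTranspose_one, ← mul_kronecker_mul, one_mul,
        conjTranspose_mul, D.P_herm]
      simp only [Matrix.mul_assoc]
    simp only [h1]
    have : ∑ e, ((1 : Matrix α α ℂ) ⊗ₖ (P * ((K e)ᴴ * K e) * P)) =
          (1 : Matrix α α ℂ) ⊗ₖ (∑ e, P * ((K e)ᴴ * K e) * P) := by
          ext i j
          simp only [Matrix.sum_apply, kroneckerMap_apply, Finset.mul_sum]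
    rw [this, ← Finset.sum_mul, ← Finset.mul_sum, hK, mul_one, D.P_P]
  have hρ₁' : ∑ e, K' e * ρ * (K' e)ᴴ = ρ₁ := by
    rw [hρ₁]
    refine Finset.sum_congr rfl fun e _ => ?_
    rw [hK'eq, conjTranspose_mul, hPH, Matrix.mul_assoc _ _ ρ, D.P_ρ, ← Matrix.mul_assoc,
      Matrix.mul_assoc _ ρ, D.ρ_P hρ.1.1]
  have hσ₁' : ∑ e, K' e * ((1 : Matrix α α ℂ) ⊗ₖ ptraceLeft ρ) * (K' e)ᴴ =
      (1 : Matrix α α ℂ) ⊗ₖ ptraceLeft ρ₁ := by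
    have h1 : ptraceLeft ρ₁ = ∑ e, K e * ptraceLeft ρ * (K e)ᴴ := by
      have : ptraceLeft ρ₁ = ∑ e, ptraceLeft
          (((1 : Matrix α α ℂ) ⊗ₖ K e) * ρ * ((1 : Matrix α α ℂ) ⊗ₖ (K e)ᴴ)) := by
        rw [hρ₁]
        ext b b'
        simp only [ptraceLeft, of_apply, Matrix.sum_apply, conjTranspose_kronecker,
          conjTranspose_one]
        rw [Finset.sum_comm]
      rw [this]
      refine Finset.sum_congr rfl fun e _ => ?_
      rw [nub_ptraceLeft_conj]
    have hrP : ptraceLeft ρ * P = ptraceLeft ρ := by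
      have := congrArg conjTranspose D.P_r
      rwa [conjTranspose_mul, D.P_herm, (nub_ptraceLeft_psd hρ.1).1] at this
    have h2 : ∀ e, K' e * ((1 : Matrix α α ℂ) ⊗ₖ ptraceLeft ρ) * (K' e)ᴴ =
        (1 : Matrix α α ℂ) ⊗ₖ (K e * ptraceLeft ρ * (K e)ᴴ) := by
      intro e
      simp only [hK']
      rw [conjTranspose_kronecker, conjTranspose_one, ← mul_kronecker_mul, ← mul_kronecker_mul,
        one_mul, one_mul, conjTranspose_mul, D.P_herm, Matrix.mul_assoc (K e), D.P_r,
        ← Matrix.mul_assoc, Matrix.mul_assoc (K e), hrP]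
    simp only [h2, h1]
    ext i j
    simp only [Matrix.sum_apply, kroneckerMap_apply, Finset.mul_sum]
  have hσpsd : ((1 : Matrix α α ℂ) ⊗ₖ ptraceLeft ρ).PosSemidef :=
    PosSemidef.one.kronecker (nub_ptraceLeft_psd hρ.1)
  have step := fun (s : ℝ) (hs : 0 ≤ s) =>
    nub_dpi_step ρ ((1 : Matrix α α ℂ) ⊗ₖ ptraceLeft ρ) ((1 : Matrix α α ℂ) ⊗ₖ P) (X s)
      ((1 : Matrix α α ℂ) ⊗ₖ (g * g)) (X' s) K' s hs hρ.1 hσpsd hsumP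
      (by intro e; simp only [hK']; rw [← mul_kronecker_mul, one_mul, Matrix.mul_assoc, D.P_P]) hPH
      (D.syl s hs) (by rw [hρ₁', hσ₁']; exact D'.syl s hs) (D.P_X s)
      (by rw [← mul_kronecker_mul, one_mul, D.g_r])
  simp only [hρ₁'] at step
  have hcalc := nub_calculus w p q w' p' q' D.p_nonneg D.w_pos D'.p_nonneg D'.w_pos
    (by rw [D.w_sum, D'.w_sum])
    (fun s hs => by rw [← D.tr_X s hs, ← D'.tr_X s hs]; exact (step s hs).1)
    (by rw [D.ent_p, D.ent_q, D'.ent_p, D'.ent_q]; linear_combination (-Real.log 2) * heq)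
  intro s hs
  exact ⟨(X' s)ᴴ, (step s hs).2 (by rw [D.tr_X s hs, D'.tr_X s hs]; exact hcalc s hs)⟩

/-- The blocks of a bipartite matrix. -/
def nubBlk (M : Matrix (α × β) (α × β) ℂ) (a a' : α) : Matrix β β ℂ :=
  Matrix.of fun b b' => M (a, b) (a', b')

theorem nubBlk_mul (M N : Matrix (α × β) (α × β) ℂ) (a c : α) :
    nubBlk (M * N) a c = ∑ b, nubBlk M a b * nubBlk N b c := by
  ext i j
  simp [nubBlk, Matrix.mul_apply, Matrix.sum_apply, Fintype.sum_prod_type]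

theorem nubBlk_kron_mul (A : Matrix β β ℂ) (M : Matrix (α × β) (α × β) ℂ) (a c : α) :
    nubBlk (((1 : Matrix α α ℂ) ⊗ₖ A) * M) a c = A * nubBlk M a c := by
  ext i j
  simp [nubBlk, Matrix.mul_apply, Fintype.sum_prod_type, one_apply, ite_mul]

theorem nubBlk_conj (M : Matrix (α × β) (α × β) ℂ) (a c : α) :
    (nubBlk M a c)ᴴ = nubBlk Mᴴ c a := by
  ext i j
  simp [nubBlk]

theorem nub_inter (K : Matrix β₁ β ℂ) (Y : Matrix (α × β₁) (α × β₁) ℂ)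
    (Z : Matrix (α × β) (α × β) ℂ)
    (h : Y * ((1 : Matrix α α ℂ) ⊗ₖ K) = ((1 : Matrix α α ℂ) ⊗ₖ K) * Z) (a c : α) :
    nubBlk Y a c * K = K * nubBlk Z a c := by
  ext i j
  have := congrFun (congrFun h (a, i)) (c, j)
  simpa [nubBlk, Matrix.mul_apply, Fintype.sum_prod_type, one_apply, ite_mul] using this

/-- Two intertwining relations give commuting blocks. -/
theorem nub_blocks_comm {β₂ : Type*} [Fintype β₂] [DecidableEq β₂]
    (K : κ → Matrix (β₁ × β₂) β ℂ) (P A B : Matrix β β ℂ) (Y : Matrix β₁ β₁ ℂ)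
    (Z : Matrix β₂ β₂ ℂ) (hP : ∑ e, (K e)ᴴ * K e = P) (hA : P * A = A) (hB : P * B = B)
    (hY : ∀ e b₂, Y * (Matrix.of fun b₁ b => K e (b₁, b₂) b) =
      (Matrix.of fun b₁ b => K e (b₁, b₂) b) * A)
    (hZ : ∀ e b₁, Z * (Matrix.of fun b₂ b => K e (b₁, b₂) b) =
      (Matrix.of fun b₂ b => K e (b₁, b₂) b) * B) :
    Commute A B := by
  have h1 : ∀ e, (Y ⊗ₖ (1 : Matrix β₂ β₂ ℂ)) * K e = K e * A := by
    intro e; ext ⟨i, j⟩ b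
    have := congrFun (congrFun (hY e j) i) b
    simpa [Matrix.mul_apply, Fintype.sum_prod_type, one_apply, mul_ite, ite_mul] using this
  have h2 : ∀ e, ((1 : Matrix β₁ β₁ ℂ) ⊗ₖ Z) * K e = K e * B := by
    intro e; ext ⟨i, j⟩ b
    have := congrFun (congrFun (hZ e i) j) b
    simpa [Matrix.mul_apply, Fintype.sum_prod_type, one_apply, mul_ite, ite_mul] using this
  have h3 : ∀ e, K e * (A * B) = K e * (B * A) := by
    intro e
    have e1 : K e * (A * B) = (Y ⊗ₖ (1 : Matrix β₂ β₂ ℂ)) * (((1 : Matrix β₁ β₁ ℂ) ⊗ₖ Z) * K e) := by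
      rw [← Matrix.mul_assoc, ← h1, Matrix.mul_assoc, ← h2]
    have e2 : K e * (B * A) = ((1 : Matrix β₁ β₁ ℂ) ⊗ₖ Z) * ((Y ⊗ₖ (1 : Matrix β₂ β₂ ℂ)) * K e) := by
      rw [← Matrix.mul_assoc, ← h2, Matrix.mul_assoc, ← h1]
    rw [e1, e2, ← Matrix.mul_assoc, ← Matrix.mul_assoc, ← mul_kronecker_mul, ← mul_kronecker_mul,
      Matrix.mul_one, Matrix.mul_one, Matrix.one_mul, Matrix.one_mul]
  have h4 : P * (A * B) = P * (B * A) := by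
    rw [← hP, Finset.sum_mul, Finset.sum_mul]
    refine Finset.sum_congr rfl fun e _ => ?_
    rw [Matrix.mul_assoc, h3, Matrix.mul_assoc]
  rw [← Matrix.mul_assoc, ← Matrix.mul_assoc, hA, hB] at h4
  exact h4

/-- The forward direction, up to simultaneous diagonalization. -/
theorem nub_forward {β₂ : Type*} [Fintype β₂] [DecidableEq β₂]
    {ρ : Matrix (α × β) (α × β) ℂ} (hρ : IsDensityMatrix ρ) 
    (K : κ → Matrix (β₁ × β₂) β ℂ) (hK : ∑ e, (K e)ᴴ * K e = 1)
    (ρ₁ : Matrix (α × β₁) (α × β₁) ℂ) (ρ₂ : Matrix (α × β₂) (α × β₂) ℂ)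
    (hρ₁ : ρ₁ = ∑ e : κ × β₂, ((1 : Matrix α α ℂ) ⊗ₖ (Matrix.of fun b₁ b => K e.1 (b₁, e.2) b))
      * ρ * ((1 : Matrix α α ℂ) ⊗ₖ (Matrix.of fun b₁ b => K e.1 (b₁, e.2) b))ᴴ)
    (hρ₂ : ρ₂ = ∑ e : κ × β₁, ((1 : Matrix α α ℂ) ⊗ₖ (Matrix.of fun b₂ b => K e.1 (e.2, b₂) b))
      * ρ * ((1 : Matrix α α ℂ) ⊗ₖ (Matrix.of fun b₂ b => K e.1 (e.2, b₂) b))ᴴ)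
    (heq₁ : vnEntropy (ptraceLeft ρ₁) - vnEntropy ρ₁ = vnEntropy (ptraceLeft ρ) - vnEntropy ρ)
    (heq₂ : vnEntropy (ptraceLeft ρ₂) - vnEntropy ρ₂ = vnEntropy (ptraceLeft ρ) - vnEntropy ρ) :
    ∀ a b c d, Commute (nubBlk ρ a b) (nubBlk ρ c d) := by
  obtain ⟨w, p, q, X, h, g, P, D⟩ := nub_spectral ρ hρ
  have H1 := nub_channel_eq hρ D (fun e : κ × β₂ => Matrix.of fun b₁ b => K e.1 (b₁, e.2) b)
    (by rw [← hK]; ext i j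
        simp [Matrix.sum_apply, Matrix.mul_apply, Fintype.sum_prod_type]
        refine Finset.sum_congr rfl fun e _ => ?_
        rw [Finset.sum_comm]) ρ₁ hρ₁ heq₁
  have H2 := nub_channel_eq hρ D (fun e : κ × β₁ => Matrix.of fun b₂ b => K e.1 (e.2, b₂) b)
    (by rw [← hK]; ext i j
        simp [Matrix.sum_apply, Matrix.mul_apply, Fintype.sum_prod_type]) ρ₂ hρ₂ heq₂
  have hXP : ∀ s a b, nubBlk (X s)ᴴ a b * P = nubBlk (X s)ᴴ a b := by
    intro s a b
    have := congrArg (fun M => (nubBlk M b a)ᴴ) (D.P_X s)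
    simp only [nubBlk_kron_mul] at this
    rwa [conjTranspose_mul, D.P_herm, nubBlk_conj] at this
  have hX0P : ∀ s a b, P * nubBlk (X s) a b = nubBlk (X s) a b := by
    intro s a b
    have := congrArg (fun M => nubBlk M a b) (D.P_X s)
    simpa only [nubBlk_kron_mul] using this
  have hG : ∀ s, 0 ≤ s → X s = ((1 : Matrix α α ℂ) ⊗ₖ (g * g)) * ρ -
      (s : ℂ) • (((1 : Matrix α α ℂ) ⊗ₖ (g * g)) * X s * ρ) := by
    intro s hs
    have e := congrArg (fun M => ((1 : Matrix α α ℂ) ⊗ₖ (g * g)) * M) (D.syl s hs)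
    simp only [Matrix.mul_add, Matrix.mul_smul] at e
    rw [← Matrix.mul_assoc, ← mul_kronecker_mul, Matrix.one_mul, D.g_r, D.P_X] at e
    rw [← e, Matrix.mul_assoc]
    abel
  have hXrP : ∀ s, 0 ≤ s → X s * ((1 : Matrix α α ℂ) ⊗ₖ P) = X s := by
    intro s hs
    rw [hG s hs, Matrix.sub_mul, Matrix.smul_mul, Matrix.mul_assoc _ ρ, Matrix.mul_assoc _ ρ,
      D.ρ_P hρ.1.1]
  have hPXH : ∀ s, 0 ≤ s → ∀ a b, P * nubBlk (X s)ᴴ a b = nubBlk (X s)ᴴ a b := by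
    intro s hs a b
    have := congrArg conjTranspose (hXrP s hs)
    rw [conjTranspose_mul, conjTranspose_kronecker, conjTranspose_one, D.P_herm] at this
    rw [← nubBlk_kron_mul, this]
  have hKP : ∑ e, (K e * P)ᴴ * (K e * P) = P := by
    have h1 : ∀ e, (K e * P)ᴴ * (K e * P) = P * ((K e)ᴴ * K e) * P := by
      intro e
      rw [conjTranspose_mul, D.P_herm]
      simp only [Matrix.mul_assoc]
    simp only [h1]
    rw [← Finset.sum_mul, ← Finset.mul_sum, hK, mul_one, D.P_P]
  have hcX : ∀ s t, 0 ≤ s → 0 ≤ t → ∀ a b c d,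
      Commute (nubBlk (X s) a b) (nubBlk (X t) c d) := by
    intro s t hs ht a b c d
    obtain ⟨Y, hY⟩ := H1 s hs
    obtain ⟨Z, hZ⟩ := H2 t ht
    have hc : Commute (nubBlk (X s)ᴴ b a) (nubBlk (X t)ᴴ d c) := by
      refine nub_blocks_comm (fun e => K e * P) P _ _ (nubBlk Y b a) (nubBlk Z d c) hKP
        (hPXH s hs _ _) (hPXH t ht _ _) ?_ ?_
      · intro e b₂
        exact nub_inter _ _ _ (hY (e, b₂)) b a
      · intro e b₁
        exact nub_inter _ _ _ (hZ (e, b₁)) d c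
    have := congrArg conjTranspose hc.eq
    simp only [conjTranspose_mul, nubBlk_conj, conjTranspose_conjTranspose] at this
    exact this.symm
  have hX0 : X 0 = ((1 : Matrix α α ℂ) ⊗ₖ (g * g)) * ρ := by
    have := hG 0 le_rfl
    simpa using this
  have hcont : ∀ a b, Continuous fun M : Matrix (α × β) (α × β) ℂ => nubBlk M a b := by
    intro a b
    refine continuous_pi fun i => continuous_pi fun j => ?_
    exact (continuous_apply (b, j)).comp (continuous_apply (a, i))
  have hT : ∀ a b c d, Commute (nubBlk (((1 : Matrix α α ℂ) ⊗ₖ (g * g)) * X 0 * ρ) a b)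
      (nubBlk (X 0) c d) := by
    intro a b c d
    have hpos : ∀ s : ℝ, 0 < s → Commute (nubBlk (((1 : Matrix α α ℂ) ⊗ₖ (g * g)) * X s * ρ) a b)
        (nubBlk (X 0) c d) := by
      intro s hs
      have e : ((1 : Matrix α α ℂ) ⊗ₖ (g * g)) * X s * ρ = (s : ℂ)⁻¹ • (X 0 - X s) := by
        have hs' : (s : ℂ) ≠ 0 := by exact_mod_cast hs.ne'
        have h2 : X 0 - X s = (s : ℂ) • (((1 : Matrix α α ℂ) ⊗ₖ (g * g)) * X s * ρ) := by
          conv_lhs => rw [hG s hs.le, hX0]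
          abel
        rw [h2, smul_smul, inv_mul_cancel₀ hs', one_smul]
      have e2 : nubBlk ((s : ℂ)⁻¹ • (X 0 - X s)) a b =
          (s : ℂ)⁻¹ • (nubBlk (X 0) a b - nubBlk (X s) a b) := rfl
      rw [e, e2]
      exact ((hcX 0 0 le_rfl le_rfl a b c d).sub_left (hcX s 0 hs.le le_rfl a b c d)).smul_left _
    have l1 : Tendsto (fun s => nubBlk (((1 : Matrix α α ℂ) ⊗ₖ (g * g)) * X s * ρ) a b) (𝓝[>] 0)
        (𝓝 (nubBlk (((1 : Matrix α α ℂ) ⊗ₖ (g * g)) * X 0 * ρ) a b)) := by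
      have hc : Continuous fun M : Matrix (α × β) (α × β) ℂ =>
          nubBlk (((1 : Matrix α α ℂ) ⊗ₖ (g * g)) * M * ρ) a b :=
        (hcont a b).comp (by fun_prop)
      exact (hc.tendsto (X 0)).comp D.lim_X
    have l2 := l1.mul_const (nubBlk (X 0) c d)
    have l3 := l1.const_mul (nubBlk (X 0) c d)
    refine tendsto_nhds_unique l2 (l3.congr' ?_)
    filter_upwards [self_mem_nhdsWithin] with s hs
    exact (hpos s hs).eq.symm
  have hb0 : ∀ a b, nubBlk (X 0) a b = g * g * nubBlk ρ a b := by
    intro a b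
    rw [hX0, nubBlk_kron_mul]
  refine nub_comm_core (ptraceLeft ρ) h g P (nubBlk ρ) D.h_herm D.g_herm D.h_sq D.h_g D.g_h D.P_h
    D.P_g ?_ ?_ ?_ ?_
  · intro a b
    rw [nubBlk_conj, hρ.1.1]
  · intro a b
    rw [← nubBlk_kron_mul, D.P_ρ]
  · intro a b c d
    rw [← hb0, ← hb0]
    exact hcX 0 0 le_rfl le_rfl a b c d
  · intro a b c d
    have := hT a b c d
    rw [nubBlk_mul] at this
    simp only [nubBlk_kron_mul, hb0] at this
    exact this

end PartE

set_option linter.unusedSectionVars false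

section PartF
variable {α β β' : Type*} [Fintype α] [DecidableEq α] [Fintype β] [DecidableEq β]
  [Fintype β'] [DecidableEq β']

theorem nub_kraus (Λ : Matrix β β ℂ →ₗ[ℂ] Matrix β' β' ℂ) (hΛ : IsCompletelyPositive Λ) :
    ∃ K : (Fin (Fintype.card β) × β') → Matrix β' β ℂ, ∀ M, Λ M = ∑ m, K m * M * (K m)ᴴ := by
  let e := Fintype.equivFin β
  let v : Fin (Fintype.card β) × β → ℂ := fun p => if e p.2 = p.1 then 1 else 0
  have h0 := hΛ (Fintype.card β) (vecMulVec v (star v)) (posSemidef_vecMulVec_self_star v)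
  obtain ⟨C, hC⟩ := nub_psd_sqrt h0
  have hsingle : ∀ i j x y, Λ (single i j 1) x y =
      ∑ m, star (C m (e i, x)) * C m (e j, y) := by
    intro i j x y
    have h1 := congrFun (congrFun hC (e i, x)) (e j, y)
    have h2 : (Matrix.of fun b b' => vecMulVec v (star v) (e i, b) (e j, b')) =
        (single i j 1 : Matrix β β ℂ) := by
      ext b b'
      simp only [of_apply, vecMulVec_apply, v, single_apply, Pi.star_apply,
        EmbeddingLike.apply_eq_iff_eq, eq_comm (a := i), eq_comm (a := j)]
      split_ifs <;> simp_all
    change Λ (Matrix.of fun b b' => vecMulVec v (star v) (e i, b) (e j, b')) x y = _ at h1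
    rw [h2] at h1
    rw [h1, Matrix.mul_apply]
    rfl
  refine ⟨fun m => Matrix.of fun x i => star (C m (e i, x)), ?_⟩
  intro M
  ext x y
  conv_lhs => rw [matrix_eq_sum_single M]
  simp only [map_sum, Matrix.sum_apply]
  have h3 : ∀ i j, Λ (single i j (M i j)) x y = M i j * ∑ m, star (C m (e i, x)) * C m (e j, y) := by
    intro i j
    rw [← hsingle, ← smul_eq_mul, ← Matrix.smul_apply, ← map_smul, smul_single, smul_eq_mul,
      mul_one]
  simp only [h3, Matrix.mul_apply, conjTranspose_apply, of_apply, star_star, Finset.mul_sum,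
    Finset.sum_mul]
  rw [Finset.sum_comm]
  rw [Finset.sum_congr rfl fun j _ => Finset.sum_comm]
  rw [Finset.sum_comm]
  refine Finset.sum_congr rfl fun m _ => Finset.sum_congr rfl fun j _ =>
    Finset.sum_congr rfl fun i _ => ?_
  ring

theorem nub_kraus_tp {κ : Type*} [Fintype κ] (Λ : Matrix β β ℂ →ₗ[ℂ] Matrix β' β' ℂ)
    (htr : ∀ X, (Λ X).trace = X.trace)
    (K : κ → Matrix β' β ℂ) (hK : ∀ M, Λ M = ∑ m, K m * M * (K m)ᴴ) :
    ∑ m, (K m)ᴴ * K m = 1 := by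
  have h : ∀ M, ((∑ m, (K m)ᴴ * K m) * M).trace = (1 * M).trace := by
    intro M
    rw [one_mul, ← htr M, hK, trace_sum, Finset.sum_mul, trace_sum]
    refine Finset.sum_congr rfl fun m _ => ?_
    rw [trace_mul_comm (K m * M), ← Matrix.mul_assoc]
  ext i j
  have := h (single j i 1)
  rw [trace_mul_single, trace_mul_single] at this
  simpa using this

theorem nub_kron_conj_apply (K : Matrix β' β ℂ) (ρ : Matrix (α × β) (α × β) ℂ) (a a' b b') :
    (((1 : Matrix α α ℂ) ⊗ₖ K) * ρ * ((1 : Matrix α α ℂ) ⊗ₖ K)ᴴ) (a, b) (a', b') =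
      (K * nubBlk ρ a a' * Kᴴ) b b' := by
  rw [conjTranspose_kronecker, conjTranspose_one]
  simp [nubBlk, Matrix.mul_apply, Fintype.sum_prod_type, one_apply, ite_mul, mul_ite]

theorem nub_forward' (ρ : Matrix (α × β) (α × β) ℂ) (hρ : IsDensityMatrix ρ)
    (Γ : Matrix β β ℂ →ₗ[ℂ] Matrix (β × β) (β × β) ℂ) (hΓ : IsQuantumChannel Γ)
    (h1 : mutualInfo (ptraceThird (idTensor Γ ρ)) = mutualInfo ρ)
    (h2 : mutualInfo (ptraceSecond (idTensor Γ ρ)) = mutualInfo ρ) :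
    ∀ a b c d, Commute (nubBlk ρ a b) (nubBlk ρ c d) := by
  obtain ⟨K, hK⟩ := nub_kraus Γ hΓ.1
  have hK1 := nub_kraus_tp Γ hΓ.2 K hK
  have hr1 : ptraceRight (ptraceThird (idTensor Γ ρ)) = ptraceRight ρ := by
    ext a a'
    have := hΓ.2 (nubBlk ρ a a')
    simp only [Matrix.trace, diag_apply, Fintype.sum_prod_type] at this
    exact this
  have hr2 : ptraceRight (ptraceSecond (idTensor Γ ρ)) = ptraceRight ρ := by
    ext a a'
    have := hΓ.2 (nubBlk ρ a a')
    simp only [Matrix.trace, diag_apply, Fintype.sum_prod_type] at this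
    rw [Finset.sum_comm] at this
    exact this
  rw [mutualInfo, mutualInfo, hr1] at h1
  rw [mutualInfo, mutualInfo, hr2] at h2
  refine nub_forward hρ K hK1 (ptraceThird (idTensor Γ ρ)) (ptraceSecond (idTensor Γ ρ)) ?_ ?_
    (by linarith) (by linarith)
  · ext ⟨a, b⟩ ⟨a', b'⟩
    rw [Matrix.sum_apply]
    simp only [nub_kron_conj_apply]
    change ∑ c, Γ (nubBlk ρ a a') (b, c) (b', c) = _
    simp only [hK, Matrix.sum_apply, Fintype.sum_prod_type (α₂ := β)]
    rw [Finset.sum_comm]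
    rfl
  · ext ⟨a, b⟩ ⟨a', b'⟩
    rw [Matrix.sum_apply]
    simp only [nub_kron_conj_apply]
    change ∑ c, Γ (nubBlk ρ a a') (c, b) (c, b') = _
    simp only [hK, Matrix.sum_apply, Fintype.sum_prod_type (α₂ := β)]
    rw [Finset.sum_comm]
    rfl

end PartF

set_option linter.unusedSectionVars false

section PartG
variable {α β : Type*} [Fintype α] [DecidableEq α] [Fintype β] [DecidableEq β]

open scoped Function in
theorem nub_simdiag {ι : Type*} [Finite ι] (H : ι → Matrix β β ℂ) (hH : ∀ i, (H i).IsHermitian)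
    (hc : ∀ i j, Commute (H i) (H j)) :
    ∃ bv : OrthonormalBasis β ℂ (EuclideanSpace ℂ β), ∀ i j, ∃ c : ℂ,
      toEuclideanLin (H i) (bv j) = c • bv j := by
  classical
  let T : ι → (EuclideanSpace ℂ β →ₗ[ℂ] EuclideanSpace ℂ β) := fun i => toEuclideanLin (H i)
  have hT : ∀ i, (T i).IsSymmetric := fun i => isHermitian_iff_isSymmetric.mp (hH i)
  have hC : Pairwise (Commute on T) := by
    intro i j _
    change T i * T j = T j * T i
    have h := (hc i j).eq
    apply LinearMap.ext
    intro x
    change toEuclideanLin (H i) (toEuclideanLin (H j) x) =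
      toEuclideanLin (H j) (toEuclideanLin (H i) x)
    simp only [toEuclideanLin_apply, mulVec_mulVec, h]
  have hint := LinearMap.IsSymmetric.directSum_isInternal_of_pairwise_commute hT hC
  have horth := LinearMap.IsSymmetric.orthogonalFamily_iInf_eigenspaces hT
  have hint' := DirectSum.isInternal_ne_bot_iff.mpr hint
  have horth' := horth.comp (γ := {γ : ι → ℂ // (⨅ j, Module.End.eigenspace (T j) (γ j)) ≠ ⊥})
    (f := Subtype.val) Subtype.val_injective
  haveI : Fintype {γ : ι → ℂ // (⨅ j, Module.End.eigenspace (T j) (γ j)) ≠ ⊥} :=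
    hint.submodule_iSupIndep.fintypeNeBotOfFiniteDimensional
  have hn : Module.finrank ℂ (EuclideanSpace ℂ β) = Fintype.card β := finrank_euclideanSpace
  refine ⟨(hint'.subordinateOrthonormalBasis hn horth').reindex (Fintype.equivFin β).symm, ?_⟩
  intro i j
  have hm := hint'.subordinateOrthonormalBasis_subordinate hn (Fintype.equivFin β j) horth'
  refine ⟨(hint'.subordinateOrthonormalBasisIndex hn (Fintype.equivFin β j) horth').1 i, ?_⟩
  have hm2 := (Submodule.mem_iInf _).mp hm i
  rw [Module.End.mem_eigenspace_iff] at hm2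
  simpa using hm2

/-- The compression of a bipartite matrix by a vector on the second factor. -/
def nubComp (v : β → ℂ) (M : Matrix (α × β) (α × β) ℂ) : Matrix α α ℂ :=
  Matrix.of fun a a' => star v ⬝ᵥ (nubBlk M a a' *ᵥ v)

theorem nubComp_psd (v : β → ℂ) {M : Matrix (α × β) (α × β) ℂ} (hM : M.PosSemidef) :
    (nubComp v M).PosSemidef := by
  let W : Matrix (α × β) α ℂ := Matrix.of fun p a => if p.1 = a then v p.2 else 0
  have : nubComp v M = Wᴴ * M * W := by
    ext a a'
    simp only [nubComp, W, of_apply, dotProduct, mulVec, nubBlk, Matrix.mul_apply,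
      conjTranspose_apply, Fintype.sum_prod_type, apply_ite star, star_zero, ite_mul, zero_mul,
      mul_ite, mul_zero, Finset.sum_ite_irrel, Finset.sum_const_zero, Finset.sum_ite_eq',
      Finset.mem_univ, if_true, Finset.mul_sum, Finset.sum_mul, Pi.star_apply]
    rw [Finset.sum_comm]
    refine Finset.sum_congr rfl fun i _ => Finset.sum_congr rfl fun j _ => ?_
    ring
  rw [this]
  exact hM.conjTranspose_mul_mul_same W

theorem nub_resolution (v : β → β → ℂ)
    (hv : ∀ j j', star (v j) ⬝ᵥ v j' = if j = j' then 1 else 0) :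
    ∑ j, vecMulVec (v j) (star (v j)) = 1 := by
  let V : Matrix β β ℂ := Matrix.of fun i j => v j i
  have h1 : Vᴴ * V = 1 := by
    ext i j
    rw [one_apply, ← hv i j]
    rfl
  have h2 := mul_eq_one_comm.mp h1
  rw [← h2]
  ext i j
  simp [Matrix.sum_apply, vecMulVec_apply, Matrix.mul_apply, V]

theorem nub_classical (ρ : Matrix (α × β) (α × β) ℂ) (hρ : IsDensityMatrix ρ)
    (hc : ∀ a b c d, Commute (nubBlk ρ a b) (nubBlk ρ c d)) : ClassicalOnB ρ := by
  have hadj : ∀ a b, (nubBlk ρ a b)ᴴ = nubBlk ρ b a := by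
    intro a b
    rw [nubBlk_conj, hρ.1.1]
  let H : (α × α) ⊕ (α × α) → Matrix β β ℂ := Sum.elim
    (fun p => nubBlk ρ p.1 p.2 + nubBlk ρ p.2 p.1)
    (fun p => Complex.I • (nubBlk ρ p.1 p.2 - nubBlk ρ p.2 p.1))
  have hH : ∀ i, (H i).IsHermitian := by
    rintro (⟨a, b⟩ | ⟨a, b⟩)
    · simp only [H, Sum.elim_inl, IsHermitian, conjTranspose_add, hadj]
      rw [add_comm]
    · simp only [H, Sum.elim_inr, IsHermitian, conjTranspose_smul, conjTranspose_sub, hadj]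
      simp only [Complex.star_def, Complex.conj_I, neg_smul, ← smul_neg, neg_sub]
  have hHc : ∀ i j, Commute (H i) (H j) := by
    rintro (⟨a, b⟩ | ⟨a, b⟩) (⟨c, d⟩ | ⟨c, d⟩)
    · exact ((hc _ _ _ _).add_left (hc _ _ _ _)).add_right ((hc _ _ _ _).add_left (hc _ _ _ _))
    · exact (((hc _ _ _ _).add_left (hc _ _ _ _)).sub_right
        ((hc _ _ _ _).add_left (hc _ _ _ _))).smul_right _
    · exact (((hc _ _ _ _).sub_left (hc _ _ _ _)).add_right
        ((hc _ _ _ _).sub_left (hc _ _ _ _))).smul_left _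
    · exact ((((hc _ _ _ _).sub_left (hc _ _ _ _)).sub_right
        ((hc _ _ _ _).sub_left (hc _ _ _ _))).smul_left _).smul_right _
  obtain ⟨bv, hbv⟩ := nub_simdiag H hH hHc
  let v : β → β → ℂ := fun j => (bv j).ofLp
  have hv : ∀ j j', star (v j) ⬝ᵥ v j' = if j = j' then 1 else 0 := by
    intro j j'
    have := orthonormal_iff_ite.mp bv.orthonormal j j'
    rw [← this, dotProduct_comm]
    rfl
  have hHv : ∀ i j, ∃ c : ℂ, H i *ᵥ v j = c • v j := by
    intro i j
    obtain ⟨c, h⟩ := hbv i j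
    exact ⟨c, congrArg WithLp.ofLp h⟩
  have hRv : ∀ a b j, ∃ c : ℂ, nubBlk ρ a b *ᵥ v j = c • v j := by
    intro a b j
    obtain ⟨c, h1⟩ := hHv (Sum.inl (a, b)) j
    obtain ⟨d, h2⟩ := hHv (Sum.inr (a, b)) j
    refine ⟨(c - Complex.I * d) / 2, ?_⟩
    have e : nubBlk ρ a b = (1 / 2 : ℂ) • (H (Sum.inl (a, b)) - Complex.I • H (Sum.inr (a, b))) := by
      simp only [H, Sum.elim_inl, Sum.elim_inr, smul_smul, Complex.I_mul_I]
      ext i j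
      simp
      ring
    rw [e, smul_mulVec, sub_mulVec, smul_mulVec, h1, h2, smul_smul, ← sub_smul, smul_smul]
    congr 1
    ring
  have hRv' : ∀ a b j, nubBlk ρ a b *ᵥ v j = nubComp (v j) ρ a b • v j := by
    intro a b j
    obtain ⟨c, h⟩ := hRv a b j
    have : nubComp (v j) ρ a b = c := by
      simp only [nubComp, of_apply, h, dotProduct_smul, hv, if_true, smul_eq_mul, mul_one]
    rw [h, this]
  have hres := nub_resolution v hv
  have hρeq : ρ = ∑ j, nubComp (v j) ρ ⊗ₖ vecMulVec (v j) (star (v j)) := by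
    ext ⟨a, b⟩ ⟨a', b'⟩
    have h1 : nubBlk ρ a a' = ∑ j, nubComp (v j) ρ a a' • vecMulVec (v j) (star (v j)) := by
      calc nubBlk ρ a a' = nubBlk ρ a a' * 1 := (mul_one _).symm
        _ = _ := by
          rw [← hres, Finset.mul_sum]
          refine Finset.sum_congr rfl fun j _ => ?_
          rw [mul_vecMulVec, hRv', smul_vecMulVec]
    have h2 := congrFun (congrFun h1 b) b'
    simp only [Matrix.sum_apply, Matrix.smul_apply, smul_eq_mul] at h2
    simp only [Matrix.sum_apply, kroneckerMap_apply]
    exact h2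
  have hpsd : ∀ j, (nubComp (v j) ρ).PosSemidef := fun j => nubComp_psd (v j) hρ.1
  have htr0 : ∀ j, 0 ≤ (nubComp (v j) ρ).trace := fun j => (hpsd j).trace_nonneg
  have htrre : ∀ j, ((nubComp (v j) ρ).trace.re : ℂ) = (nubComp (v j) ρ).trace := fun j =>
    (Complex.eq_re_of_ofReal_le (r := 0) (by simpa using htr0 j)).symm
  have hsum : ∑ j, (nubComp (v j) ρ).trace = 1 := by
    rw [← hρ.2]
    conv_rhs => rw [hρeq]
    rw [trace_sum]
    refine Finset.sum_congr rfl fun j _ => ?_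
    rw [trace_kronecker, trace_vecMulVec, dotProduct_comm, hv, if_pos rfl, mul_one]
  have hne : Nonempty α := by
    by_contra hemp
    rw [not_nonempty_iff] at hemp
    have := hρ.2
    simp [Matrix.trace] at this
  obtain ⟨a0⟩ := hne
  let τ0 : Matrix α α ℂ := vecMulVec (Pi.single a0 1) (star (Pi.single a0 1))
  have hτ0 : IsDensityMatrix τ0 := by
    refine ⟨posSemidef_vecMulVec_self_star _, ?_⟩
    simp [τ0, trace_vecMulVec]
  classical
  refine ⟨fun j => (nubComp (v j) ρ).trace.re, fun j => if (nubComp (v j) ρ).trace = 0 then τ0 else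
    ((nubComp (v j) ρ).trace)⁻¹ • nubComp (v j) ρ, v, ?_, ?_, ?_, hv, ?_⟩
  · intro j
    exact (Complex.nonneg_iff.mp (htr0 j)).1
  · have := congrArg Complex.re hsum
    simpa using this
  · intro j
    dsimp only
    split_ifs with h
    · exact hτ0
    · refine ⟨(hpsd j).smul (inv_nonneg.mpr (htr0 j)), ?_⟩
      rw [trace_smul, smul_eq_mul, inv_mul_cancel₀ h]
  · conv_lhs => rw [hρeq]
    refine Finset.sum_congr rfl fun j _ => ?_
    rw [htrre]
    dsimp only
    split_ifs with h
    · rw [(hpsd j).trace_eq_zero_iff.mp h]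
      simp
    · rw [smul_kronecker, smul_smul, mul_inv_cancel₀ h, one_smul]

/-- The measure-and-broadcast channel of an orthonormal basis. -/
noncomputable def nubCast (v : β → β → ℂ) : Matrix β β ℂ →ₗ[ℂ] Matrix (β × β) (β × β) ℂ where
  toFun M := ∑ j, (star (v j) ⬝ᵥ (M *ᵥ v j)) •
    vecMulVec (fun x : β × β => v j x.1 * v j x.2) (star fun x : β × β => v j x.1 * v j x.2)
  map_add' M N := by
    simp only [add_mulVec, dotProduct_add, add_smul, Finset.sum_add_distrib]
  map_smul' c M := by
    simp only [smul_mulVec, dotProduct_smul, smul_assoc, Finset.smul_sum, RingHom.id_apply]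

theorem nubCast_idTensor {δ : Type*} [Fintype δ] [DecidableEq δ] (v : β → β → ℂ)
    (M : Matrix (δ × β) (δ × β) ℂ) :
    idTensor (nubCast v) M = ∑ j, nubComp (v j) M ⊗ₖ
      vecMulVec (fun x : β × β => v j x.1 * v j x.2) (star fun x : β × β => v j x.1 * v j x.2) := by
  ext ⟨a, x⟩ ⟨a', x'⟩
  change nubCast v (nubBlk M a a') x x' = _
  simp only [nubCast, LinearMap.coe_mk, AddHom.coe_mk, Matrix.sum_apply, Matrix.smul_apply,
    kroneckerMap_apply, smul_eq_mul, nubComp, of_apply]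

theorem nub_converse (ρ : Matrix (α × β) (α × β) ℂ) (hcl : ClassicalOnB ρ) :
    ∃ Γ : Matrix β β ℂ →ₗ[ℂ] Matrix (β × β) (β × β) ℂ, IsQuantumChannel Γ ∧
        mutualInfo (ptraceThird (idTensor Γ ρ)) = mutualInfo ρ ∧
        mutualInfo (ptraceSecond (idTensor Γ ρ)) = mutualInfo ρ := by
  obtain ⟨p, τ, v, hp, hp1, hτ, hv, hρeq⟩ := hcl
  have hcomp : ∀ j, nubComp (v j) ρ = (p j : ℂ) • τ j := by
    intro j
    ext a a'
    have h1 : nubBlk ρ a a' = ∑ k, ((p k : ℂ) * τ k a a') • vecMulVec (v k) (star (v k)) := by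
      ext b b'
      rw [hρeq]
      simp [nubBlk, Matrix.sum_apply, kroneckerMap_apply, mul_assoc]
    have h2 : ∀ k, vecMulVec (v k) (star (v k)) *ᵥ v j = if k = j then v k else 0 := by
      intro k
      rw [vecMulVec_mulVec, hv]
      split_ifs <;> simp
    simp only [nubComp, of_apply, h1, sum_mulVec, smul_mulVec, h2, dotProduct_sum, dotProduct_smul]
    rw [Finset.sum_eq_single j]
    · simp [hv]
    · intro k _ hk
      simp [hk]
    · simp
  have hsingle : ∀ j, ∑ c, v j c * star (v j c) = 1 := by
    intro j
    have := hv j j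
    rw [if_pos rfl, dotProduct_comm] at this
    exact this
  have h3 : ptraceThird (idTensor (nubCast v) ρ) = ρ := by
    rw [nubCast_idTensor]
    conv_rhs => rw [hρeq]
    ext ⟨a, b⟩ ⟨a', b'⟩
    simp only [ptraceThird, of_apply, Matrix.sum_apply, hcomp, kroneckerMap_apply,
      Matrix.smul_apply, smul_eq_mul, vecMulVec_apply, Pi.star_apply, star_mul]
    rw [Finset.sum_comm]
    refine Finset.sum_congr rfl fun j _ => ?_
    trans (p j * τ j a a' * (v j b * star (v j b'))) * ∑ c, v j c * star (v j c)
    · rw [Finset.mul_sum]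
      refine Finset.sum_congr rfl fun c _ => ?_
      ring
    · rw [hsingle]; ring
  have h2 : ptraceSecond (idTensor (nubCast v) ρ) = ρ := by
    rw [nubCast_idTensor]
    conv_rhs => rw [hρeq]
    ext ⟨a, b⟩ ⟨a', b'⟩
    simp only [ptraceSecond, of_apply, Matrix.sum_apply, hcomp, kroneckerMap_apply,
      Matrix.smul_apply, smul_eq_mul, vecMulVec_apply, Pi.star_apply, star_mul]
    rw [Finset.sum_comm]
    refine Finset.sum_congr rfl fun j _ => ?_
    trans (p j * τ j a a' * (v j b * star (v j b'))) * ∑ c, v j c * star (v j c)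
    · rw [Finset.mul_sum]
      refine Finset.sum_congr rfl fun c _ => ?_
      ring
    · rw [hsingle]; ring
  refine ⟨nubCast v, ⟨?_, ?_⟩, by rw [h3], by rw [h2]⟩
  · intro k M hM
    rw [nubCast_idTensor]
    exact posSemidef_sum _ fun j _ =>
      (nubComp_psd (v j) hM).kronecker (posSemidef_vecMulVec_self_star _)
  · intro M
    have hw : ∀ j, (vecMulVec (fun x : β × β => v j x.1 * v j x.2)
        (star fun x : β × β => v j x.1 * v j x.2)).trace = 1 := by
      intro j
      rw [trace_vecMulVec, dotProduct, Fintype.sum_prod_type]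
      simp only [Pi.star_apply, star_mul]
      trans (∑ c, v j c * star (v j c)) * ∑ c, v j c * star (v j c)
      · rw [Finset.sum_mul_sum]
        refine Finset.sum_congr rfl fun c _ => Finset.sum_congr rfl fun d _ => ?_
        ring
      · rw [hsingle, one_mul]
    simp only [nubCast, LinearMap.coe_mk, AddHom.coe_mk, trace_sum, trace_smul, hw, smul_eq_mul,
      mul_one]
    conv_rhs => rw [← mul_one M, ← nub_resolution v hv, Finset.mul_sum, trace_sum]
    refine Finset.sum_congr rfl fun j _ => ?_
    rw [mul_vecMulVec, trace_vecMulVec, dotProduct_comm]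

end PartG

/-- **No-unilocal-broadcasting of mutual information.** There is a channel
`Γ : B → B₁B₂` such that `ρ̃ = (id_A ⊗ Γ)[ρ_{AB}]` satisfies
`I(A:B₁) = I(A:B₂) = I(A:B)` if and only if `ρ_{AB}` is classical on `B`. -/
theorem no_unilocal_broadcasting_mutualInfo {α β : Type*} [Fintype α] [DecidableEq α]
    [Fintype β] [DecidableEq β]
    (ρ : Matrix (α × β) (α × β) ℂ) (hρ : IsDensityMatrix ρ) :
    (∃ Γ : Matrix β β ℂ →ₗ[ℂ] Matrix (β × β) (β × β) ℂ, IsQuantumChannel Γ ∧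
        mutualInfo (ptraceThird (idTensor Γ ρ)) = mutualInfo ρ ∧
        mutualInfo (ptraceSecond (idTensor Γ ρ)) = mutualInfo ρ) ↔
      ClassicalOnB ρ := by
  constructor
  · rintro ⟨Γ, hΓ, h1, h2⟩
    exact nub_classical ρ hρ (nub_forward' ρ hρ Γ hΓ h1 h2)
  · exact nub_converse ρ
end

section
/- Mutual information is monotone under one-sided local channels: for any bipartite density matrix ρ_{AB} and any quantum channel Λ: B → B', the state ρ' = (id_A ⊗ Λ)[ρ_{AB}] satisfies I(A:B')_{ρ'} ≤ I(A:B)_ρ; moreover this monotonicity is equivalent to the non-negativity of conditional mutual information (strong subadditivity), via the isometric (Stinespring) dilation ρ_{AB'E} = (1_A ⊗ V) ρ_{AB} (1_A ⊗ V)†: one has I(A:B)_ρ = I(A:B'E)_{ρ_{AB'E}} and I(A:B'E) − I(A:B') = I(A:E|B') ≥ 0. -/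
open Matrix Kronecker ComplexOrder

section Aux

/-- A unitary diagonalization of `A` with real eigenvalues `p`. -/
def DiagBy {n : Type*} [Fintype n] [DecidableEq n] (A U : Matrix n n ℂ) (p : n → ℝ) : Prop :=
  Uᴴ * U = 1 ∧ A = U * diagonal (fun i => (p i : ℂ)) * Uᴴ

theorem DiagBy.exists {n : Type*} [Fintype n] [DecidableEq n] {A : Matrix n n ℂ}
    (hA : A.PosSemidef) : ∃ U p, DiagBy A U p ∧ ∀ i, 0 ≤ p i := by
  refine ⟨hA.1.eigenvectorUnitary, hA.1.eigenvalues, ⟨?_, ?_⟩, hA.eigenvalues_nonneg⟩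
  · exact Unitary.coe_star_mul_self _
  · exact hA.1.spectral_theorem

theorem DiagBy.isHermitian {n : Type*} [Fintype n] [DecidableEq n] {A U : Matrix n n ℂ}
    {p : n → ℝ} (h : DiagBy A U p) : A.IsHermitian := by
  rw [Matrix.IsHermitian, h.2]
  simp only [conjTranspose_mul, conjTranspose_conjTranspose, diagonal_conjTranspose, mul_assoc]
  congr 3
  ext i
  simp

theorem DiagBy.add_one {n : Type*} [Fintype n] [DecidableEq n] {A U : Matrix n n ℂ}
    {p : n → ℝ} (h : DiagBy A U p) (c : ℝ) :
    DiagBy (A + (c : ℂ) • (1 : Matrix n n ℂ)) U (fun i => p i + c) := by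
  refine ⟨h.1, ?_⟩
  have h1 : U * Uᴴ = 1 := mul_eq_one_comm.mp h.1
  have h2 : diagonal (fun i => ((p i + c : ℝ) : ℂ))
      = diagonal (fun i => (p i : ℂ)) + (c : ℂ) • (1 : Matrix n n ℂ) := by
    ext i j
    by_cases hij : i = j
    · subst hij; simp
    · simp [hij]
  rw [h2, mul_add, add_mul, ← h.2]
  simp [h1]

/-- Entropy via the roots of the characteristic polynomial. -/
theorem vnEntropy_eq_roots {n : Type*} [Fintype n] [DecidableEq n] {A : Matrix n n ℂ}
    (hA : A.IsHermitian) :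
    vnEntropy A = -(A.charpoly.roots.map fun z => z.re * Real.logb 2 z.re).sum := by
  rw [vnEntropy, dif_pos hA, hA.roots_charpoly_eq_eigenvalues]
  rw [Multiset.map_map]
  rfl

theorem DiagBy.vnEntropy {n : Type*} [Fintype n] [DecidableEq n] {A U : Matrix n n ℂ}
    {p : n → ℝ} (h : DiagBy A U p) : vnEntropy A = -(∑ i, p i * Real.log (p i)) / Real.log 2 := by
  rw [vnEntropy_eq_roots h.isHermitian, h.2, Matrix.charpoly_mul_comm, ← mul_assoc, h.1, one_mul,
    charpoly_diagonal, Polynomial.roots_prod]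
  · simp [Finset.sum_div, Real.logb, mul_div_assoc, neg_div]
  · simp [Finset.prod_ne_zero_iff, Polynomial.X_sub_C_ne_zero]

theorem vnEntropy_isometry {m n : Type*} [Fintype n] [DecidableEq n] [Fintype m] [DecidableEq m]
    {A : Matrix n n ℂ} (hA : A.IsHermitian) (V : Matrix m n ℂ) (hV : Vᴴ * V = 1) :
    vnEntropy (V * A * Vᴴ) = vnEntropy A := by
  have hB : (V * A * Vᴴ).IsHermitian := Matrix.isHermitian_mul_mul_conjTranspose V hA
  rw [vnEntropy_eq_roots hA, vnEntropy_eq_roots hB]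
  have h := congrArg Polynomial.roots (Matrix.charpoly_mul_comm' (V * A) Vᴴ)
  rw [← Matrix.mul_assoc, hV, Matrix.one_mul, Polynomial.roots_mul, Polynomial.roots_mul] at h
  · have h2 := congrArg (fun s : Multiset ℂ => (s.map fun z => z.re * Real.logb 2 z.re).sum) h
    simpa [Multiset.map_nsmul, Multiset.sum_nsmul] using h2
  · exact mul_ne_zero (by simp) (Matrix.charpoly_monic _).ne_zero
  · exact mul_ne_zero (by simp) (Matrix.charpoly_monic _).ne_zero

/-- The variational functional. -/
noncomputable def varJ {n : Type*} [Fintype n] [DecidableEq n] (t : ℝ) (X ρ σ : Matrix n n ℂ) : ℝ :=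
  2 * (trace (Xᴴ * ρ)).re - (trace (X * Xᴴ * σ)).re - t * (trace (Xᴴ * X * ρ)).re

theorem varJ_eq {n : Type*} [Fintype n] [DecidableEq n] (t : ℝ) {ρ σ U W : Matrix n n ℂ}
    {p q : n → ℝ} (hρ : DiagBy ρ U p) (hσ : DiagBy σ W q) (Y : Matrix n n ℂ) :
    varJ t (W * Y * Uᴴ) ρ σ = ∑ i, ∑ j, (2 * ((star (Y j i) * (Wᴴ * U) j i).re * p i)
      - Complex.normSq (Y j i) * (q j + t * p i)) := by
  have e1 : trace ((W * Y * Uᴴ)ᴴ * ρ)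
      = trace (Yᴴ * ((Wᴴ * U) * diagonal (fun i => (p i : ℂ)))) := by
    rw [hρ.2]
    simp only [conjTranspose_mul, conjTranspose_conjTranspose, mul_assoc]
    rw [trace_mul_comm]
    simp only [mul_assoc, hρ.1, mul_one]
  have e2 : trace ((W * Y * Uᴴ) * (W * Y * Uᴴ)ᴴ * σ)
      = trace (Yᴴ * (diagonal (fun i => (q i : ℂ)) * Y)) := by
    rw [hσ.2]
    simp only [conjTranspose_mul, conjTranspose_conjTranspose, mul_assoc]
    rw [trace_mul_comm]
    have : Y * (Uᴴ * (U * (Yᴴ * (Wᴴ * (W * (diagonal (fun i => (q i : ℂ)) * Wᴴ)))))) * W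
       = Y * ((Uᴴ * U) * (Yᴴ * ((Wᴴ * W) * (diagonal (fun i => (q i : ℂ)) * (Wᴴ * W))))) := by
      simp only [mul_assoc]
    rw [this, hρ.1, hσ.1, one_mul, one_mul, mul_one, trace_mul_comm, mul_assoc]
  have e3 : trace ((W * Y * Uᴴ)ᴴ * (W * Y * Uᴴ) * ρ)
      = trace (Yᴴ * (Y * diagonal (fun i => (p i : ℂ)))) := by
    rw [hρ.2]
    simp only [conjTranspose_mul, conjTranspose_conjTranspose, mul_assoc]
    rw [trace_mul_comm]
    have : Yᴴ * (Wᴴ * (W * (Y * (Uᴴ * (U * (diagonal (fun i => (p i : ℂ)) * Uᴴ)))))) * U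
       = Yᴴ * ((Wᴴ * W) * (Y * ((Uᴴ * U) * (diagonal (fun i => (p i : ℂ)) * (Uᴴ * U))))) := by
      simp only [mul_assoc]
    rw [this, hρ.1, hσ.1, one_mul, one_mul, mul_one]
  rw [varJ, e1, e2, e3]
  generalize Wᴴ * U = K
  simp only [trace, diag, mul_apply (M := Yᴴ), mul_diagonal, diagonal_mul,
    conjTranspose_apply, Complex.re_sum, Finset.mul_sum, ← Finset.sum_sub_distrib]
  refine Finset.sum_congr rfl fun i _ => Finset.sum_congr rfl fun j _ => ?_
  simp [Complex.normSq_apply]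
  ring

theorem scalar_var (y c : ℂ) (p s : ℝ) (hs : 0 < s) :
    2 * ((star y * c).re * p) - Complex.normSq y * s ≤ Complex.normSq c * (p ^ 2 / s) := by
  have h : Complex.normSq c * (p ^ 2 / s) - (2 * ((star y * c).re * p) - Complex.normSq y * s)
      = ((c.re * p - s * y.re) ^ 2 + (c.im * p - s * y.im) ^ 2) / s := by
    simp [Complex.normSq_apply]
    field_simp
    ring
  have : 0 ≤ ((c.re * p - s * y.re) ^ 2 + (c.im * p - s * y.im) ^ 2) / s := by positivity
  linarith

theorem varJ_le {n : Type*} [Fintype n] [DecidableEq n] {t : ℝ} (ht : 0 ≤ t)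
    {ρ σ U W : Matrix n n ℂ}
    {p q : n → ℝ} (hρ : DiagBy ρ U p) (hσ : DiagBy σ W q) (hp : ∀ i, 0 < p i) (hq : ∀ i, 0 < q i)
    (X : Matrix n n ℂ) :
    varJ t X ρ σ ≤ ∑ i, ∑ j, Complex.normSq ((Wᴴ * U) j i) * (p i ^ 2 / (q j + t * p i)) := by
  have hX : X = W * (Wᴴ * X * U) * Uᴴ := by
    have h1 : U * Uᴴ = 1 := mul_eq_one_comm.mp hρ.1
    have h2 : W * Wᴴ = 1 := mul_eq_one_comm.mp hσ.1
    calc X = (W * Wᴴ) * X * (U * Uᴴ) := by simp [h1, h2]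
      _ = _ := by simp only [mul_assoc]
  rw [hX, varJ_eq t hρ hσ]
  refine Finset.sum_le_sum fun i _ => Finset.sum_le_sum fun j _ => ?_
  exact scalar_var _ _ _ _ (by have := hp i; have := hq j; positivity)

theorem varJ_attained {n : Type*} [Fintype n] [DecidableEq n] {t : ℝ} (ht : 0 ≤ t)
    {ρ σ U W : Matrix n n ℂ}
    {p q : n → ℝ} (hρ : DiagBy ρ U p) (hσ : DiagBy σ W q) (hp : ∀ i, 0 < p i) (hq : ∀ i, 0 < q i) :
    ∃ X, varJ t X ρ σ
      = ∑ i, ∑ j, Complex.normSq ((Wᴴ * U) j i) * (p i ^ 2 / (q j + t * p i)) := by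
  refine ⟨W * (Matrix.of fun j i => (Wᴴ * U) j i * ((p i / (q j + t * p i) : ℝ) : ℂ)) * Uᴴ, ?_⟩
  rw [varJ_eq t hρ hσ]
  generalize Wᴴ * U = K
  refine Finset.sum_congr rfl fun i _ => Finset.sum_congr rfl fun j _ => ?_
  have hs : 0 < q j + t * p i := by have := hp i; have := hq j; positivity
  simp only [of_apply]
  generalize q j + t * p i = s at *
  have hs' := hs.ne'
  simp only [Complex.normSq_mul, Complex.normSq_ofReal]
  have : (star (K j i * ((p i / s : ℝ) : ℂ)) * K j i).re = Complex.normSq (K j i) * (p i / s) := by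
    simp [Complex.normSq_apply, Complex.mul_re, Complex.mul_im, -Complex.ofReal_div]
    ring
  rw [this]
  field_simp
  ring

/-- Sum of weights over the second basis. -/
theorem weight_sum_one {n : Type*} [Fintype n] [DecidableEq n] {U W : Matrix n n ℂ}
    (hU : Uᴴ * U = 1) (hW : Wᴴ * W = 1) (i : n) :
    ∑ j, Complex.normSq ((Wᴴ * U) j i) = 1 := by
  have h2 : W * Wᴴ = 1 := mul_eq_one_comm.mp hW
  have h : (Wᴴ * U)ᴴ * (Wᴴ * U) = 1 := by
    rw [conjTranspose_mul, conjTranspose_conjTranspose]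
    calc Uᴴ * W * (Wᴴ * U) = Uᴴ * ((W * Wᴴ) * U) := by simp only [mul_assoc]
      _ = 1 := by rw [h2, one_mul, hU]
  have h3 := congrArg Complex.re (congrFun (congrFun h i) i)
  rw [mul_apply, Complex.re_sum] at h3
  simpa [Complex.normSq_apply] using h3

theorem weight_sum_p {n : Type*} [Fintype n] [DecidableEq n] {ρ U W : Matrix n n ℂ} {p : n → ℝ}
    (hρ : DiagBy ρ U p) (j : n) :
    ∑ i, Complex.normSq ((Wᴴ * U) j i) * p i = ((Wᴴ * ρ * W) j j).re := by
  have h : Wᴴ * ρ * W = ((Wᴴ * U) * diagonal (fun i => (p i : ℂ))) * (Wᴴ * U)ᴴ := by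
    rw [hρ.2, conjTranspose_mul, conjTranspose_conjTranspose]
    simp only [mul_assoc]
  rw [h, mul_apply, Complex.re_sum]
  refine Finset.sum_congr rfl fun i _ => ?_
  generalize Wᴴ * U = K
  simp [mul_diagonal, Complex.normSq_apply]
  ring

theorem DiagBy.trace {n : Type*} [Fintype n] [DecidableEq n] {A U : Matrix n n ℂ}
    {p : n → ℝ} (h : DiagBy A U p) : (trace A).re = ∑ i, p i := by
  rw [h.2, trace_mul_comm, ← mul_assoc, h.1, one_mul, trace_diagonal, Complex.re_sum]
  simp

/-- Truncated relative entropy. -/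
noncomputable def truncG {n : Type*} [Fintype n] [DecidableEq n] (U W : Matrix n n ℂ)
    (p q : n → ℝ) (t : ℝ) : ℝ :=
  ∑ i, ∑ j, Complex.normSq ((Wᴴ * U) j i) * (p i * (Real.log (q j + t * p i) - Real.log (q j)))

theorem truncG_hasDerivAt {n : Type*} [Fintype n] [DecidableEq n] (U W : Matrix n n ℂ)
    {p q : n → ℝ} (hp : ∀ i, 0 < p i) (hq : ∀ i, 0 < q i) {t : ℝ} (ht : 0 ≤ t) :
    HasDerivAt (truncG U W p q)
      (∑ i, ∑ j, Complex.normSq ((Wᴴ * U) j i) * (p i ^ 2 / (q j + t * p i))) t := by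
  unfold truncG
  refine HasDerivAt.fun_sum fun i _ => HasDerivAt.fun_sum fun j _ => HasDerivAt.const_mul _ ?_
  have hs : 0 < q j + t * p i := by have := hp i; have := hq j; positivity
  have h1 : HasDerivAt (fun t : ℝ => q j + t * p i) (p i) t := by
    simpa using ((hasDerivAt_id t).mul_const (p i)).const_add (q j)
  have h2 := ((h1.log hs.ne').sub_const (Real.log (q j))).const_mul (p i)
  convert h2 using 1
  ring

open Filter Topology in
theorem truncG_tendsto {n : Type*} [Fintype n] [DecidableEq n] {ρ U W : Matrix n n ℂ}
    {p q : n → ℝ} (hρ : DiagBy ρ U p) (hW : Wᴴ * W = 1)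
    (hp : ∀ i, 0 < p i) (hq : ∀ i, 0 < q i) :
    Tendsto (fun t : ℝ => truncG U W p q t - (trace ρ).re * Real.log t) atTop
      (𝓝 (∑ i, p i * Real.log (p i) - ∑ j, ((Wᴴ * ρ * W) j j).re * Real.log (q j))) := by
  have hlim : ∑ i, p i * Real.log (p i) - ∑ j, ((Wᴴ * ρ * W) j j).re * Real.log (q j)
      = ∑ i, ∑ j, Complex.normSq ((Wᴴ * U) j i) * (p i * (Real.log (p i) - Real.log (q j))) := by
    simp_rw [← weight_sum_p hρ, Finset.sum_mul]
    rw [Finset.sum_comm (f := fun j i => Complex.normSq ((Wᴴ * U) j i) * p i * Real.log (q j)),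
      ← Finset.sum_sub_distrib]
    refine Finset.sum_congr rfl fun i _ => ?_
    rw [← one_mul (p i * Real.log (p i)), ← weight_sum_one hρ.1 hW i, Finset.sum_mul,
      ← Finset.sum_sub_distrib]
    exact Finset.sum_congr rfl fun j _ => by ring
  rw [hlim]
  have hfun : ∀ t : ℝ, 0 < t → truncG U W p q t - (trace ρ).re * Real.log t
      = ∑ i, ∑ j, Complex.normSq ((Wᴴ * U) j i) *
        (p i * (Real.log (q j * t⁻¹ + p i) - Real.log (q j))) := by
    intro t ht
    rw [hρ.trace, Finset.sum_mul, truncG, ← Finset.sum_sub_distrib]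
    refine Finset.sum_congr rfl fun i _ => ?_
    rw [← one_mul (p i * Real.log t), ← weight_sum_one hρ.1 hW i, Finset.sum_mul,
      ← Finset.sum_sub_distrib]
    refine Finset.sum_congr rfl fun j _ => ?_
    have hs : 0 < q j * t⁻¹ + p i := by have := hp i; have := hq j; positivity
    have : q j + t * p i = t * (q j * t⁻¹ + p i) := by field_simp
    rw [this, Real.log_mul ht.ne' hs.ne']
    ring
  refine Tendsto.congr' ((eventually_gt_atTop 0).mono fun t ht => (hfun t ht).symm) ?_
  refine tendsto_finsetSum _ fun i _ => tendsto_finsetSum _ fun j _ => ?_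
  refine Tendsto.const_mul _ (Tendsto.const_mul _ (Tendsto.sub_const ?_ _))
  have h1 : Tendsto (fun t : ℝ => q j * t⁻¹ + p i) atTop (𝓝 (p i)) := by
    simpa using (tendsto_inv_atTop_zero.const_mul (q j)).add_const (p i)
  exact h1.log (hp i).ne'

/-- Monotonicity of relative entropy for positive matrices (in diagonalized form). -/
theorem relEntropy_mono {n m : Type*} [Fintype n] [DecidableEq n] [Fintype m] [DecidableEq m]
    (ι : Matrix m m ℂ → Matrix n n ℂ) (hmul : ∀ X Y, ι (X * Y) = ι X * ι Y)
    (hstar : ∀ X, ι Xᴴ = (ι X)ᴴ) (hone : ι 1 = 1)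
    {ρ σ U W : Matrix n n ℂ} {p q : n → ℝ} {ρ' σ' U' W' : Matrix m m ℂ} {p' q' : m → ℝ}
    (hρ : DiagBy ρ U p) (hσ : DiagBy σ W q) (hp : ∀ i, 0 < p i) (hq : ∀ i, 0 < q i)
    (hρ' : DiagBy ρ' U' p') (hσ' : DiagBy σ' W' q') (hp' : ∀ i, 0 < p' i) (hq' : ∀ i, 0 < q' i)
    (dρ : ∀ X, trace (ι X * ρ) = trace (X * ρ')) (dσ : ∀ X, trace (ι X * σ) = trace (X * σ')) :
    ∑ i, p' i * Real.log (p' i) - ∑ j, ((W'ᴴ * ρ' * W') j j).re * Real.log (q' j)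
      ≤ ∑ i, p i * Real.log (p i) - ∑ j, ((Wᴴ * ρ * W) j j).re * Real.log (q j) := by
  have htr : trace ρ = trace ρ' := by simpa [hone] using dρ 1
  refine le_of_tendsto_of_tendsto (truncG_tendsto hρ' hσ'.1 hp' hq')
    (truncG_tendsto hρ hσ.1 hp hq) ?_
  refine (Filter.eventually_ge_atTop 0).mono fun T hT => ?_
  rw [htr]
  simp only
  have hmono : MonotoneOn (fun t => truncG U W p q t - truncG U' W' p' q' t) (Set.Ici 0) := by
    have hd : ∀ t : ℝ, 0 ≤ t → HasDerivAt (fun t => truncG U W p q t - truncG U' W' p' q' t) _ t :=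
      fun t ht => (truncG_hasDerivAt U W hp hq ht).sub (truncG_hasDerivAt U' W' hp' hq' ht)
    refine monotoneOn_of_deriv_nonneg (convex_Ici 0)
      (fun t ht => (hd t ht).continuousAt.continuousWithinAt)
      (fun t ht => (hd t (interior_subset ht)).differentiableAt.differentiableWithinAt) ?_
    intro t ht
    have ht0 : 0 ≤ t := interior_subset ht
    rw [(hd t ht0).deriv, sub_nonneg]
    obtain ⟨X, hX⟩ := varJ_attained ht0 hρ' hσ' hp' hq'
    rw [← hX]
    refine le_trans (le_of_eq ?_) (varJ_le ht0 hρ hσ hp hq (ι X))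
    simp only [varJ, ← hstar, ← hmul, dρ, dσ]
  have h0 := hmono (Set.mem_Ici.2 le_rfl) (Set.mem_Ici.2 hT) hT
  simp [truncG] at h0
  simp only [truncG]
  linarith

end Aux

section Aux2

theorem kron_conj_apply {α m n : Type*} [Fintype α] [DecidableEq α] [Fintype n] [DecidableEq n]
    [Fintype m] [DecidableEq m] (V : Matrix m n ℂ) (ρ : Matrix (α × n) (α × n) ℂ)
    (a a' : α) (x y : m) :
    (((1 : Matrix α α ℂ) ⊗ₖ V) * ρ * ((1 : Matrix α α ℂ) ⊗ₖ V)ᴴ) (a, x) (a', y)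
      = (V * (Matrix.of fun b b' => ρ (a, b) (a', b')) * Vᴴ) x y := by
  simp [mul_apply, Fintype.sum_prod_type, one_apply, ite_mul, Finset.sum_ite_eq, apply_ite]

theorem ptraceLeft_kron_conj {α m n : Type*} [Fintype α] [DecidableEq α] [Fintype n]
    [DecidableEq n] [Fintype m] [DecidableEq m] (V : Matrix m n ℂ) (ρ : Matrix (α × n) (α × n) ℂ) :
    ptraceLeft (((1 : Matrix α α ℂ) ⊗ₖ V) * ρ * ((1 : Matrix α α ℂ) ⊗ₖ V)ᴴ)
      = V * ptraceLeft ρ * Vᴴ := by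
  have h : ptraceLeft ρ = ∑ a, (Matrix.of fun b b' => ρ (a, b) (a, b')) := by
    ext i j; simp [ptraceLeft, Matrix.sum_apply]
  rw [h, Matrix.mul_sum, Matrix.sum_mul]
  ext x y
  simp only [ptraceLeft, of_apply, kron_conj_apply, Matrix.sum_apply]

theorem ptraceRight_kron_conj {α m n : Type*} [Fintype α] [DecidableEq α] [Fintype n]
    [DecidableEq n] [Fintype m] [DecidableEq m] (V : Matrix m n ℂ) (hV : Vᴴ * V = 1)
    (ρ : Matrix (α × n) (α × n) ℂ) :
    ptraceRight (((1 : Matrix α α ℂ) ⊗ₖ V) * ρ * ((1 : Matrix α α ℂ) ⊗ₖ V)ᴴ)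
      = ptraceRight ρ := by
  ext a a'
  simp only [ptraceRight, of_apply, kron_conj_apply]
  change trace (V * (Matrix.of fun b b' => ρ (a, b) (a', b')) * Vᴴ) = _
  rw [trace_mul_comm, ← Matrix.mul_assoc, hV, Matrix.one_mul]
  rfl

theorem DiagBy.kron {α n : Type*} [Fintype α] [DecidableEq α] [Fintype n]
    [DecidableEq n] {A U : Matrix n n ℂ} {p : n → ℝ} (h : DiagBy A U p) :
    DiagBy ((1 : Matrix α α ℂ) ⊗ₖ A) ((1 : Matrix α α ℂ) ⊗ₖ U) (fun x => p x.2) := by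
  constructor
  · rw [conjTranspose_kronecker, ← mul_kronecker_mul, h.1]
    simp
  · have : (diagonal fun x : α × n => (p x.2 : ℂ))
        = (1 : Matrix α α ℂ) ⊗ₖ (diagonal fun i => (p i : ℂ)) := by
      rw [← diagonal_one, diagonal_kronecker_diagonal]
      simp
    rw [this, conjTranspose_kronecker, ← mul_kronecker_mul, ← mul_kronecker_mul, ← h.2]
    simp

theorem DiagBy.sum_log {α n : Type*} [Fintype α] [DecidableEq α] [Fintype n]
    [DecidableEq n] {ρ : Matrix (α × n) (α × n) ℂ} {W : Matrix n n ℂ} {q : n → ℝ}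
    (h : DiagBy (ptraceLeft ρ) W q) :
    ∑ x : α × n, ((((1 : Matrix α α ℂ) ⊗ₖ W)ᴴ * ρ * ((1 : Matrix α α ℂ) ⊗ₖ W)) x x).re
      * Real.log (q x.2) = ∑ j, q j * Real.log (q j) := by
  have h1 := ptraceLeft_kron_conj Wᴴ ρ
  rw [conjTranspose_kronecker, conjTranspose_conjTranspose, conjTranspose_one] at h1
  have h2 : Wᴴ * ptraceLeft ρ * W = diagonal fun i => (q i : ℂ) := by
    calc _ = (Wᴴ * W) * (diagonal fun i => (q i : ℂ)) * (Wᴴ * W) := by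
          rw [h.2]; simp only [mul_assoc]
      _ = _ := by simp [h.1]
  rw [conjTranspose_kronecker, conjTranspose_one, Fintype.sum_prod_type_right]
  refine Finset.sum_congr rfl fun j _ => ?_
  simp only
  rw [← Finset.sum_mul, ← Complex.re_sum]
  congr 1
  have h3 := congrFun (congrFun (h1.trans h2) j) j
  simp only [ptraceLeft, of_apply] at h3
  rw [h3]
  simp

/-- The embedding `X ↦ X ⊗ 1` on a tripartite system. -/
noncomputable def emb {α β γ : Type*} [DecidableEq γ] (X : Matrix (α × β) (α × β) ℂ) :
    Matrix (α × β × γ) (α × β × γ) ℂ :=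
  (X ⊗ₖ (1 : Matrix γ γ ℂ)).submatrix (Equiv.prodAssoc α β γ).symm (Equiv.prodAssoc α β γ).symm

theorem trace_emb {α β γ : Type*} [Fintype α] [DecidableEq α] [Fintype β] [DecidableEq β]
    [Fintype γ] [DecidableEq γ] (X : Matrix (α × β) (α × β) ℂ)
    (R : Matrix (α × β × γ) (α × β × γ) ℂ) :
    trace (emb X * R) = trace (X * ptraceThird R) := by
  simp only [trace, diag, mul_apply, emb, submatrix_apply, ptraceThird, of_apply,
    Fintype.sum_prod_type, kroneckerMap_apply, Equiv.prodAssoc_symm_apply, one_apply, mul_ite,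
    mul_one, mul_zero, ite_mul, zero_mul, Finset.sum_ite_eq, Finset.mem_univ, if_true,
    Finset.mul_sum]
  refine Finset.sum_congr rfl fun a _ => Finset.sum_congr rfl fun b _ => ?_
  rw [Finset.sum_comm]
  refine Finset.sum_congr rfl fun c _ => ?_
  rw [Finset.sum_comm]

theorem ptraceThird_kron {α β γ : Type*} [Fintype α] [DecidableEq α] [Fintype β] [DecidableEq β]
    [Fintype γ] [DecidableEq γ] (N : Matrix (β × γ) (β × γ) ℂ) :
    ptraceThird ((1 : Matrix α α ℂ) ⊗ₖ N) = (1 : Matrix α α ℂ) ⊗ₖ ptraceRight N := by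
  ext x y
  simp [ptraceThird, ptraceRight, Finset.mul_sum]

theorem ptraceLeft_third {α β γ : Type*} [Fintype α] [DecidableEq α] [Fintype β] [DecidableEq β]
    [Fintype γ] [DecidableEq γ] (R : Matrix (α × β × γ) (α × β × γ) ℂ) :
    ptraceLeft (ptraceThird R) = ptraceRight (ptraceLeft R) := by
  ext x y
  simp only [ptraceThird, ptraceRight, ptraceLeft, of_apply]
  exact Finset.sum_comm

theorem ptraceRight_third {α β γ : Type*} [Fintype α] [DecidableEq α] [Fintype β] [DecidableEq β]
    [Fintype γ] [DecidableEq γ] (R : Matrix (α × β × γ) (α × β × γ) ℂ) :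
    ptraceRight (ptraceThird R) = ptraceRight R := by
  ext x y
  simp only [ptraceThird, ptraceRight, of_apply, Fintype.sum_prod_type]

theorem ssa_pos {α β γ : Type*} [Fintype α] [DecidableEq α] [Fintype β] [DecidableEq β]
    [Fintype γ] [DecidableEq γ] {R U : Matrix (α × β × γ) (α × β × γ) ℂ}
    {U' : Matrix (α × β) (α × β) ℂ} {W : Matrix (β × γ) (β × γ) ℂ} {W' : Matrix β β ℂ}
    {p : α × β × γ → ℝ} {p' : α × β → ℝ} {q : β × γ → ℝ} {q' : β → ℝ}
    (hR : DiagBy R U p) (hAB : DiagBy (ptraceThird R) U' p') (hBC : DiagBy (ptraceLeft R) W q)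
    (hB : DiagBy (ptraceRight (ptraceLeft R)) W' q')
    (hp : ∀ i, 0 < p i) (hp' : ∀ i, 0 < p' i) (hq : ∀ i, 0 < q i) (hq' : ∀ i, 0 < q' i) :
    ∑ i, p' i * Real.log (p' i) - ∑ i, q' i * Real.log (q' i)
      ≤ ∑ i, p i * Real.log (p i) - ∑ i, q i * Real.log (q i) := by
  have h := relEntropy_mono (emb (α := α) (β := β) (γ := γ))
    (fun X Y => by
      simp only [emb]
      rw [submatrix_mul_equiv, ← mul_kronecker_mul, one_mul])
    (fun X => by
      simp only [emb]
      rw [conjTranspose_submatrix, conjTranspose_kronecker, conjTranspose_one])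
    (by simp [emb])
    hR (hBC.kron (α := α)) hp (fun x => hq x.2) hAB (hB.kron (α := α)) hp' (fun x => hq' x.2)
    (fun X => trace_emb X R)
    (fun X => by rw [trace_emb, ptraceThird_kron])
  rw [hBC.sum_log] at h
  rw [DiagBy.sum_log (by rw [ptraceLeft_third]; exact hB)] at h
  exact h

theorem ptraceLeft_posSemidef {α β : Type*} [Fintype α] [DecidableEq α] [Fintype β]
    [DecidableEq β] {R : Matrix (α × β) (α × β) ℂ} (hR : R.PosSemidef) :
    (ptraceLeft R).PosSemidef := by
  have : ptraceLeft R = ∑ a, R.submatrix (fun b => (a, b)) (fun b => (a, b)) := by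
    ext i j; simp [ptraceLeft, Matrix.sum_apply]
  rw [this]
  exact Matrix.posSemidef_sum _ fun a _ => hR.submatrix _

theorem ptraceRight_posSemidef {α β : Type*} [Fintype α] [DecidableEq α] [Fintype β]
    [DecidableEq β] {R : Matrix (α × β) (α × β) ℂ} (hR : R.PosSemidef) :
    (ptraceRight R).PosSemidef := by
  have : ptraceRight R = ∑ b, R.submatrix (fun a => (a, b)) (fun a => (a, b)) := by
    ext i j; simp [ptraceRight, Matrix.sum_apply]
  rw [this]
  exact Matrix.posSemidef_sum _ fun a _ => hR.submatrix _

theorem ptraceThird_posSemidef {α β γ : Type*} [Fintype α] [DecidableEq α] [Fintype β]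
    [DecidableEq β] [Fintype γ] [DecidableEq γ]
    {R : Matrix (α × β × γ) (α × β × γ) ℂ} (hR : R.PosSemidef) :
    (ptraceThird R).PosSemidef := by
  have : ptraceThird R = ∑ c, R.submatrix (fun p => (p.1, p.2, c)) (fun p => (p.1, p.2, c)) := by
    ext i j; simp [ptraceThird, Matrix.sum_apply]
  rw [this]
  exact Matrix.posSemidef_sum _ fun a _ => hR.submatrix _

theorem ptraceLeft_add {α β : Type*} [Fintype α] [DecidableEq α] [Fintype β]
    [DecidableEq β] (R : Matrix (α × β) (α × β) ℂ) (c : ℝ) :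
    ptraceLeft (R + (c : ℂ) • 1) = ptraceLeft R + ((Fintype.card α * c : ℝ) : ℂ) • 1 := by
  ext i j
  by_cases h : i = j <;> simp [ptraceLeft, Finset.sum_add_distrib, one_apply, h]

theorem ptraceRight_add {α β : Type*} [Fintype α] [DecidableEq α] [Fintype β]
    [DecidableEq β] (R : Matrix (α × β) (α × β) ℂ) (c : ℝ) :
    ptraceRight (R + (c : ℂ) • 1) = ptraceRight R + ((Fintype.card β * c : ℝ) : ℂ) • 1 := by
  ext i j
  by_cases h : i = j <;> simp [ptraceRight, Finset.sum_add_distrib, one_apply, h]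

theorem ptraceThird_add {α β γ : Type*} [Fintype α] [DecidableEq α] [Fintype β]
    [DecidableEq β] [Fintype γ] [DecidableEq γ]
    (R : Matrix (α × β × γ) (α × β × γ) ℂ) (c : ℝ) :
    ptraceThird (R + (c : ℂ) • 1) = ptraceThird R + ((Fintype.card γ * c : ℝ) : ℂ) • 1 := by
  ext i j
  obtain ⟨i1, i2⟩ := i
  obtain ⟨j1, j2⟩ := j
  by_cases h : i1 = j1 <;> by_cases h' : i2 = j2 <;>
    simp [ptraceThird, Finset.sum_add_distrib, one_apply, h, h']

open Filter Topology in
theorem tendsto_shift {n : Type*} [Fintype n] (p : n → ℝ) (k : ℝ) :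
    Tendsto (fun δ : ℝ => ∑ i, (p i + k * δ) * Real.log (p i + k * δ)) (𝓝[>] 0)
      (𝓝 (∑ i, p i * Real.log (p i))) := by
  have hc : Continuous (fun δ : ℝ => ∑ i, (p i + k * δ) * Real.log (p i + k * δ)) := by
    refine continuous_finsetSum _ fun i _ => ?_
    exact Real.continuous_mul_log.comp (f := fun δ : ℝ => p i + k * δ) (by fun_prop)
  have := (hc.tendsto 0).mono_left (nhdsWithin_le_nhds (s := Set.Ioi 0))
  simpa using this

theorem ssa {α β γ : Type*} [Fintype α] [DecidableEq α] [Fintype β] [DecidableEq β]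
    [Fintype γ] [DecidableEq γ] [Nonempty α] [Nonempty γ]
    {R : Matrix (α × β × γ) (α × β × γ) ℂ} (hR : R.PosSemidef) :
    0 ≤ vnEntropy (ptraceThird R) + vnEntropy (ptraceLeft R) - vnEntropy R
      - vnEntropy (ptraceRight (ptraceLeft R)) := by
  obtain ⟨U, p, hU, hp⟩ := DiagBy.exists hR
  obtain ⟨U', p', hU', hp'⟩ := DiagBy.exists (ptraceThird_posSemidef hR)
  obtain ⟨W, q, hW, hq⟩ := DiagBy.exists (ptraceLeft_posSemidef hR)
  obtain ⟨W', q', hW', hq'⟩ :=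
    DiagBy.exists (ptraceRight_posSemidef (ptraceLeft_posSemidef hR))
  have hA : (0 : ℝ) < Fintype.card α := by exact_mod_cast Fintype.card_pos
  have hC : (0 : ℝ) < Fintype.card γ := by exact_mod_cast Fintype.card_pos
  have key : ∑ i, p' i * Real.log (p' i) - ∑ i, q' i * Real.log (q' i)
      ≤ ∑ i, p i * Real.log (p i) - ∑ i, q i * Real.log (q i) := by
    refine le_of_tendsto_of_tendsto
      ((tendsto_shift p' (Fintype.card γ)).sub
        (tendsto_shift q' (Fintype.card γ * Fintype.card α)))
      ((tendsto_shift p 1).sub (tendsto_shift q (Fintype.card α))) ?_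
    filter_upwards [self_mem_nhdsWithin] with δ hδ
    have hδ : 0 < δ := hδ
    refine ssa_pos (R := R + (δ : ℂ) • 1) (U := U) (U' := U') (W := W) (W' := W') ?_ ?_ ?_ ?_
      ?_ ?_ ?_ ?_
    · simpa using hU.add_one δ
    · rw [ptraceThird_add]; exact hU'.add_one _
    · rw [ptraceLeft_add]; exact hW.add_one _
    · rw [ptraceLeft_add, ptraceRight_add, ← mul_assoc]; exact hW'.add_one _
    · intro i; have := hp i; positivity
    · intro i; have := hp' i; positivity
    · intro i; have := hq i; positivity
    · intro i; have := hq' i; positivity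
  rw [hU.vnEntropy, hU'.vnEntropy, hW.vnEntropy, hW'.vnEntropy, ← add_div, ← sub_div, ← sub_div]
  refine div_nonneg ?_ (Real.log_nonneg (by norm_num))
  linarith

end Aux2


/-- **Monotonicity of mutual information under one-sided local channels**, and its
equivalence with strong subadditivity via the Stinespring dilation
`ρ_{AB'E} = (𝟙 ⊗ V) ρ_{AB} (𝟙 ⊗ V)ᴴ`: one has `I(A:B')_{ρ'} ≤ I(A:B)_ρ`,
`I(A:B)_ρ = I(A:B'E)`, and `I(A:B'E) - I(A:B') = I(A:E|B') ≥ 0`. -/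
theorem mutualInfo_monotone_oneSided {α β β' ε : Type*} [Fintype α] [DecidableEq α]
    [Fintype β] [DecidableEq β] [Fintype β'] [DecidableEq β'] [Fintype ε] [DecidableEq ε]
    (ρ : Matrix (α × β) (α × β) ℂ) (hρ : IsDensityMatrix ρ)
    (Λ : Matrix β β ℂ →ₗ[ℂ] Matrix β' β' ℂ) (hΛ : IsQuantumChannel Λ)
    (V : Matrix (β' × ε) β ℂ) (hV : Vᴴ * V = 1)
    (hdil : ∀ X : Matrix β β ℂ, Λ X = ptraceRight (V * X * Vᴴ)) :
    mutualInfo (idTensor Λ ρ) ≤ mutualInfo ρ ∧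
      mutualInfo ρ =
        mutualInfo (((1 : Matrix α α ℂ) ⊗ₖ V) * ρ * ((1 : Matrix α α ℂ) ⊗ₖ V)ᴴ) ∧
      mutualInfo (((1 : Matrix α α ℂ) ⊗ₖ V) * ρ * ((1 : Matrix α α ℂ) ⊗ₖ V)ᴴ) -
          mutualInfo (ptraceThird (((1 : Matrix α α ℂ) ⊗ₖ V) * ρ *
            ((1 : Matrix α α ℂ) ⊗ₖ V)ᴴ)) =
        vnEntropy (ptraceThird (((1 : Matrix α α ℂ) ⊗ₖ V) * ρ *
            ((1 : Matrix α α ℂ) ⊗ₖ V)ᴴ)) +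
          vnEntropy (ptraceLeft (((1 : Matrix α α ℂ) ⊗ₖ V) * ρ *
            ((1 : Matrix α α ℂ) ⊗ₖ V)ᴴ)) -
          vnEntropy (((1 : Matrix α α ℂ) ⊗ₖ V) * ρ * ((1 : Matrix α α ℂ) ⊗ₖ V)ᴴ) -
          vnEntropy (ptraceRight (ptraceLeft (((1 : Matrix α α ℂ) ⊗ₖ V) * ρ *
            ((1 : Matrix α α ℂ) ⊗ₖ V)ᴴ))) ∧
      0 ≤ vnEntropy (ptraceThird (((1 : Matrix α α ℂ) ⊗ₖ V) * ρ *
            ((1 : Matrix α α ℂ) ⊗ₖ V)ᴴ)) +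
          vnEntropy (ptraceLeft (((1 : Matrix α α ℂ) ⊗ₖ V) * ρ *
            ((1 : Matrix α α ℂ) ⊗ₖ V)ᴴ)) -
          vnEntropy (((1 : Matrix α α ℂ) ⊗ₖ V) * ρ * ((1 : Matrix α α ℂ) ⊗ₖ V)ᴴ) -
          vnEntropy (ptraceRight (ptraceLeft (((1 : Matrix α α ℂ) ⊗ₖ V) * ρ *
            ((1 : Matrix α α ℂ) ⊗ₖ V)ᴴ))) := by
  have hne : Nonempty (α × β) := by
    by_contra hcon
    rw [not_nonempty_iff] at hcon
    have h := hρ.2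
    simp [trace] at h
  have hα : Nonempty α := hne.map Prod.fst
  have hβ : Nonempty β := hne.map Prod.snd
  have hε : Nonempty ε := by
    by_contra hcon
    rw [not_nonempty_iff] at hcon
    obtain ⟨b⟩ := hβ
    have h := congrFun (congrFun hV b) b
    simp [mul_apply] at h
  have hVV : ((1 : Matrix α α ℂ) ⊗ₖ V)ᴴ * ((1 : Matrix α α ℂ) ⊗ₖ V) = 1 := by
    rw [conjTranspose_kronecker, ← mul_kronecker_mul, hV]
    simp
  have hid : idTensor Λ ρ
      = ptraceThird (((1 : Matrix α α ℂ) ⊗ₖ V) * ρ * ((1 : Matrix α α ℂ) ⊗ₖ V)ᴴ) := by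
    ext x y
    simp only [ptraceThird, of_apply, kron_conj_apply]
    change Λ (Matrix.of fun b b' => ρ (x.1, b) (y.1, b')) x.2 y.2 = _
    rw [hdil]
    rfl
  have hI : mutualInfo ρ =
      mutualInfo (((1 : Matrix α α ℂ) ⊗ₖ V) * ρ * ((1 : Matrix α α ℂ) ⊗ₖ V)ᴴ) := by
    rw [mutualInfo, mutualInfo, ptraceRight_kron_conj V hV, ptraceLeft_kron_conj,
      vnEntropy_isometry hρ.1.1 _ hVV, vnEntropy_isometry (ptraceLeft_posSemidef hρ.1).1 _ hV]
  have hR : (((1 : Matrix α α ℂ) ⊗ₖ V) * ρ * ((1 : Matrix α α ℂ) ⊗ₖ V)ᴴ).PosSemidef :=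
    hρ.1.mul_mul_conjTranspose_same _
  have hssa := ssa hR
  rw [hid, hI]
  generalize ((1 : Matrix α α ℂ) ⊗ₖ V) * ρ * ((1 : Matrix α α ℂ) ⊗ₖ V)ᴴ = R at *
  have hdiff : mutualInfo R - mutualInfo (ptraceThird R)
      = vnEntropy (ptraceThird R) + vnEntropy (ptraceLeft R) - vnEntropy R
      - vnEntropy (ptraceRight (ptraceLeft R)) := by
    rw [mutualInfo, mutualInfo, ptraceRight_third, ptraceLeft_third]
    ring
  exact ⟨by linarith, rfl, hdiff, hssa⟩
end
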